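/- Let B be a unital complex algebra, (M, E : M → B) a B-probability space, D ⊆ B a unital subalgebra, and F : B → D a conditional expectation satisfying the faithfulness condition. Let X₁, …, Xₙ ∈ M. Then X₁, …, Xₙ are free from B with amalgamation over D (with respect to F∘E) if and only if their B-valued cumulant series satisfies k^{X₁,…,Xₙ}_{B; i₁,…,i_k}(b₁, …, b_{k−1}) = F( k^{X₁,…,Xₙ}_{B; i₁,…,i_k}(F(b₁), …, F(b_{k−1})) ) for all k ≥ 1, all indices i₁, …, i_k ∈ {1, …, n} and all b₁, …, b_{k−1} ∈ B; equivalently, if and only if k^{X₁,…,Xₙ}_{B; i₁,…,i_k}(b₁, …, b_{k−1}) = k^{X₁,…,Xₙ}_{D; i₁,…,i_k}(F(b₁), …, F(b_{k−1})) for all such k, indices and b_j, where the D-valued cumulant series is computed in the D-probability space (M, F∘E). -/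

import Mathlib

open scoped Classical

noncomputable section

namespace OVFree

variable {B M : Type*}

/-- `P` is a set partition of `{1, …, n}` (modelled on `Fin n`): its blocks are
nonempty and every point lies in exactly one block. -/
def IsPartition {n : ℕ} (P : Finset (Finset (Fin n))) : Prop :=
  (∀ t ∈ P, t.Nonempty) ∧ ∀ i : Fin n, ∃! t, t ∈ P ∧ i ∈ t

/-- A set partition is non-crossing if there are no `a < b < c < d` with `a, c` in one
block and `b, d` in a different block. -/
def IsNonCrossing {n : ℕ} (P : Finset (Finset (Fin n))) : Prop :=
  ∀ a b c d : Fin n, a < b → b < c → c < d →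
    ∀ t ∈ P, ∀ u ∈ P, a ∈ t → c ∈ t → b ∈ u → d ∈ u → t = u

/-- `NC n`: the (finite) set of non-crossing partitions of `{1, …, n}`. -/
def NC (n : ℕ) : Finset (Finset (Finset (Fin n))) :=
  Finset.univ.filter fun P => IsPartition P ∧ IsNonCrossing P

/-- `i` is the least element of its block of `P`. -/
def IsBlockMin {n : ℕ} (P : Finset (Finset (Fin n))) (i : Fin n) : Prop :=
  ∀ t ∈ P, i ∈ t → ∀ j ∈ t, i ≤ j

/-- `i` is the greatest element of its block of `P`. -/
def IsBlockMax {n : ℕ} (P : Finset (Finset (Fin n))) (i : Fin n) : Prop :=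
  ∀ t ∈ P, i ∈ t → ∀ j ∈ t, j ≤ i

section Brack

variable [Ring B] [Algebra ℂ B] [Ring M] [Algebra ℂ M]

/-- A multiplicative map `⟨⋯⟩ : ⋃ₙ Mⁿ → B` (tuples are encoded as lists): a sequence of
`ℂ`-multilinear maps which is `B`-balanced in the sense of Speicher.  Here `ι : B →ₐ[ℂ] M`
is the inclusion of `B` as a unital subalgebra of `M`. -/
structure MultiplicativeMap (ι : B →ₐ[ℂ] M) where
  toFun : List M → B
  map_add : ∀ (pre : List M) (x y : M) (post : List M),
    toFun (pre ++ (x + y) :: post) = toFun (pre ++ x :: post) + toFun (pre ++ y :: post)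
  map_smul : ∀ (pre : List M) (c : ℂ) (x : M) (post : List M),
    toFun (pre ++ (c • x) :: post) = c • toFun (pre ++ x :: post)
  B_left : ∀ (b : B) (x : M) (post : List M),
    toFun ((ι b * x) :: post) = b * toFun (x :: post)
  B_right : ∀ (pre : List M) (x : M) (b : B),
    toFun (pre ++ [x * ι b]) = toFun (pre ++ [x]) * b
  B_mid : ∀ (pre : List M) (x : M) (b : B) (y : M) (post : List M),
    toFun (pre ++ (x * ι b) :: y :: post) = toFun (pre ++ x :: (ι b * y) :: post)

/-- Auxiliary operation: multiply the most recently collected argument of an open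
bracket (arguments are stored in reverse order) on the right by `ι b`. -/
def closeArg (ι : B →ₐ[ℂ] M) (b : B) : List M → List M
  | [] => []
  | a :: t => (a * ι b) :: t

/-- One step of the evaluation of the bracketing `π⟨m₁, …, mₙ⟩`.  The state consists of a
stack of argument lists (in reverse order) for the currently open brackets, together with
the product of the values of the already closed outermost brackets.  When `i` is the least
element of its block a new bracket is opened; `m i` is appended to the innermost open
bracket; when `i` is the greatest element of its block the innermost bracket `⟨…⟩` is
evaluated via `κ` and its value is multiplied into the preceding argument of the enclosing
bracket (per the insertion rule), resp. into the outer product (per the disjoint-union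
rule). -/
def bracketingStep (κ : List M → B) (ι : B →ₐ[ℂ] M) {n : ℕ} (P : Finset (Finset (Fin n)))
    (m : Fin n → M) (s : List (List M) × B) (i : Fin n) : List (List M) × B :=
  let st₁ : List (List M) := if IsBlockMin P i then [] :: s.1 else s.1
  let st₂ : List (List M) :=
    match st₁ with
    | [] => []
    | ts :: rest => (m i :: ts) :: rest
  if IsBlockMax P i then
    match st₂ with
    | [] => ([], s.2)
    | ts :: rest =>
        let b := κ ts.reverse
        match rest with
        | [] => ([], s.2 * b)
        | us :: rest' => (closeArg ι b us :: rest', s.2)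
  else (st₂, s.2)

/-- The bracketing `π⟨m₁, …, mₙ⟩ ∈ B` determined by a non-crossing partition `P` and a
multiplicative map `κ`: each block of `P` is interpreted as a bracket `⟨⋯⟩`, inner blocks
being inserted (as elements of `B`) after the preceding element of the enclosing block,
and the values of the outermost brackets being multiplied in order. -/
def bracketing (κ : List M → B) (ι : B →ₐ[ℂ] M) {n : ℕ} (P : Finset (Finset (Fin n)))
    (m : Fin n → M) : B :=
  ((List.finRange n).foldl (bracketingStep κ ι P m) ([], 1)).2

/-- `κ` is the `B`-valued cumulant map `{⋯}_E` of the `B`-probability space `(M, E)`: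
a multiplicative map satisfying the moment–cumulant formula
`E(m₁ ⋯ mₙ) = Σ_{π ∈ NC(n)} π{m₁, …, mₙ}_E`. -/
def IsCumulantMap (ι : B →ₐ[ℂ] M) (E : M →ₗ[ℂ] B) (κ : MultiplicativeMap ι) : Prop :=
  ∀ (n : ℕ) (m : Fin n → M), 0 < n →
    E (((List.finRange n).map m).prod) = ∑ P ∈ NC n, bracketing κ.toFun ι P m

/-- The cumulant series `k_{i₁,…,i_{k+1}}(b₁, …, b_k) = {X_{i₁} b₁, …, X_{i_k} b_k, X_{i_{k+1}}}`
of a family `X₁, …, X_N` with respect to a multiplicative map `κ`. -/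
def cumulantSeries {ι : B →ₐ[ℂ] M} (κ : MultiplicativeMap ι) {N : ℕ} (X : Fin N → M)
    {k : ℕ} (i : Fin (k + 1) → Fin N) (b : Fin k → B) : B :=
  κ.toFun (((List.finRange k).map fun j => X (i j.castSucc) * ι (b j)) ++ [X (i (Fin.last k))])

/-- `E : M → B` is a conditional expectation onto the unital subalgebra `ι(B) ⊆ M`. -/
def IsCondExp (ι : B →ₐ[ℂ] M) (E : M →ₗ[ℂ] B) : Prop :=
  E 1 = 1 ∧ ∀ (b b' : B) (m : M), E (ι b * m * ι b') = b * E m * b'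

/-- The subalgebras `A₁, A₂ ⊆ M` are free with amalgamation (with respect to the
`D`-valued expectation `G`, `D` being a common subalgebra of `A₁` and `A₂`): any
alternating product of `G`-centered elements of `A₁` and `A₂` is `G`-centered. -/
def FreeWithAmalgamation (G : M → B) (A₁ A₂ : Subalgebra ℂ M) : Prop :=
  ∀ l : List (M × Bool), l ≠ [] →
    List.Chain' (fun p q : M × Bool => p.2 ≠ q.2) l →
    (∀ p ∈ l, p.1 ∈ (if p.2 then A₁ else A₂) ∧ G p.1 = 0) →
    G (l.map Prod.fst).prod = 0

end Brack

end OVFree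

open OVFree

/-!
A non-crossing partition is determined by the positions at which blocks open and close, so the
moment-cumulant formula can be summed position by position, keeping a stack of open blocks. Sorting
it by the block of the first variable gives a recursion that determines the cumulant series:
`E (Xₓ r)` is the sum over the possible blocks of `Xₓ`. A word `r` is therefore read from left to
right as an operator on functions of the state of that block, and a series is the cumulant series
exactly if evaluating this operator on it returns `E (Xₓ r)` for every word `r`.

By faithfulness of `F`, freeness says that `E` maps the algebra `A` generated by the variables and
`D` into `D` and vanishes on `a b₁ a₁ ⋯ bₖ aₖ` for `k ≥ 1`, `a ∈ A`, centred `bⱼ ∈ B` and centred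
`aⱼ ∈ A`. Suppose a series vanishes as soon as one of its coefficients is killed by `F`. Then no
variable of such a product can join the block without creating a vanishing term, so the product acts
on the series like a single element of `M`. If the cumulant series factors through `F` and has
values in `D`, the vanishing on products follows by induction on their lengths. Conversely, products
of this form followed by an element of `B` span everything, so under freeness the `D`-valued series
composed with `F` satisfies the recursion of the `B`-valued series and is equal to it.
-/

namespace OVFree

/-! ### Non-crossing partitions and height functions -/

section Partition

variable {n : ℕ} {P : Finset (Finset (Fin n))}

/-- The relation of lying in a common block of `P`. -/
def SameBlock (P : Finset (Finset (Fin n))) (i j : Fin n) : Prop :=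
  ∃ t ∈ P, i ∈ t ∧ j ∈ t

/-- The set of equivalence classes of a relation on `{1, …, n}`. -/
def classes (r : Fin n → Fin n → Prop) : Finset (Finset (Fin n)) :=
  Finset.univ.image fun i => Finset.univ.filter (r i)

theorem isPartition_classes {r : Fin n → Fin n → Prop} (hr : Equivalence r) :
    IsPartition (classes r) := by
  simp only [IsPartition, classes, Finset.mem_image, Finset.mem_univ, true_and,
    forall_exists_index, forall_apply_eq_imp_iff]
  refine ⟨fun i => ⟨i, by simp [hr.refl]⟩, fun i => ⟨_, ⟨⟨i, rfl⟩, by simp [hr.refl]⟩, ?_⟩⟩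
  rintro _ ⟨⟨j, rfl⟩, hj⟩
  replace hj : r j i := by simpa using hj
  ext k
  simpa using ⟨hr.trans (hr.symm hj), hr.trans hj⟩

theorem sameBlock_classes {r : Fin n → Fin n → Prop} (hr : Equivalence r) {i j : Fin n} :
    SameBlock (classes r) i j ↔ r i j := by
  simp only [SameBlock, classes, Finset.mem_image, Finset.mem_univ, true_and,
    exists_exists_eq_and, Finset.mem_filter]
  exact ⟨fun ⟨k, hi, hj⟩ => hr.trans (hr.symm hi) hj, fun h => ⟨i, hr.refl i, h⟩⟩

theorem IsPartition.sameBlock_iff_mem (hP : IsPartition P) {t : Finset (Fin n)} (ht : t ∈ P)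
    {i j : Fin n} (hi : i ∈ t) : SameBlock P i j ↔ j ∈ t := by
  refine ⟨fun ⟨u, hu, hiu, hju⟩ => ?_, fun hj => ⟨t, ht, hi, hj⟩⟩
  rwa [(hP.2 i).unique ⟨ht, hi⟩ ⟨hu, hiu⟩]

theorem IsPartition.classes_sameBlock (hP : IsPartition P) : classes (SameBlock P) = P := by
  have block_eq {t} (ht : t ∈ P) {i} (hi : i ∈ t) : Finset.univ.filter (SameBlock P i) = t := by
    ext j
    simp [hP.sameBlock_iff_mem ht hi]
  ext t
  simp only [classes, Finset.mem_image, Finset.mem_univ, true_and]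
  constructor
  · rintro ⟨i, rfl⟩
    obtain ⟨u, ⟨hu, hi⟩, -⟩ := hP.2 i
    rwa [block_eq hu hi]
  · intro ht
    obtain ⟨i, hi⟩ := hP.1 t ht
    exact ⟨i, block_eq ht hi⟩

theorem isBlockMin_iff_sameBlock {i : Fin n} :
    IsBlockMin P i ↔ ∀ j, SameBlock P i j → i ≤ j :=
  ⟨fun h j ⟨t, ht, hi, hj⟩ => h t ht hi j hj, fun h t ht hi j hj => h j ⟨t, ht, hi, hj⟩⟩

theorem isBlockMax_iff_sameBlock {i : Fin n} :
    IsBlockMax P i ↔ ∀ j, SameBlock P i j → j ≤ i :=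
  ⟨fun h j ⟨t, ht, hi, hj⟩ => h t ht hi j hj, fun h t ht hi j hj => h j ⟨t, ht, hi, hj⟩⟩

theorem IsPartition.isBlockMin_iff (hP : IsPartition P) {t : Finset (Fin n)} (ht : t ∈ P)
    {i : Fin n} (hi : i ∈ t) : IsBlockMin P i ↔ ∀ j ∈ t, i ≤ j := by
  simp only [isBlockMin_iff_sameBlock, hP.sameBlock_iff_mem ht hi]

theorem IsPartition.isBlockMax_iff (hP : IsPartition P) {t : Finset (Fin n)} (ht : t ∈ P)
    {i : Fin n} (hi : i ∈ t) : IsBlockMax P i ↔ ∀ j ∈ t, j ≤ i := by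
  simp only [isBlockMax_iff_sameBlock, hP.sameBlock_iff_mem ht hi]

theorem IsPartition.exists_isBlockMin (hP : IsPartition P) (i : Fin n) :
    ∃ j, SameBlock P i j ∧ IsBlockMin P j := by
  obtain ⟨t, ⟨ht, hi⟩, -⟩ := hP.2 i
  have hj := t.min'_mem ⟨i, hi⟩
  exact ⟨_, ⟨t, ht, hi, hj⟩, (hP.isBlockMin_iff ht hj).2 fun k hk => t.min'_le k hk⟩

end Partition

section Height

variable {n : ℕ} {φ : Fin n → Bool × Bool} {H : ℕ → ℕ}

/-- `H` is a height function of the word `φ` of flags (opens a block, closes a block): `H k` is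
the number of blocks that are open between the positions `k - 1` and `k`. -/
structure IsHeight (φ : Fin n → Bool × Bool) (H : ℕ → ℕ) : Prop where
  step : ∀ i : Fin n, H (i + 1) + (φ i).2.toNat = H i + (φ i).1.toNat
  pos : ∀ i : Fin n, 0 < H i + (φ i).1.toNat
  last : H n = 0

theorem isHeight_cons_iff {a : Bool × Bool} :
    IsHeight (Fin.cons a φ : Fin (n + 1) → Bool × Bool) H ↔
      (H 1 + a.2.toNat = H 0 + a.1.toNat ∧ 0 < H 0 + a.1.toNat) ∧
        IsHeight φ fun k => H (k + 1) := by
  constructor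
  · rintro ⟨step, pos, last⟩
    exact ⟨⟨by simpa using step 0, by simpa using pos 0⟩, fun i => by simpa using step i.succ,
      fun i => by simpa using pos i.succ, last⟩
  · rintro ⟨⟨step₀, pos₀⟩, step, pos, last⟩
    exact ⟨Fin.cases (by simpa using step₀) (by simpa using step),
      Fin.cases (by simpa using pos₀) (by simpa using pos), last⟩

theorem IsHeight.eq_of_le {H' : ℕ → ℕ} (hH : IsHeight φ H) (hH' : IsHeight φ H')
    (h₀ : H 0 = H' 0) {k : ℕ} (hk : k ≤ n) : H k = H' k := by
  induction k with
  | zero => exact h₀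
  | succ k ih =>
    have := hH.step ⟨k, hk⟩
    have := hH'.step ⟨k, hk⟩
    have := ih (by omega)
    grind

/-- The words of flags that have a height function with initial value `h`. -/
def flagWords (n h : ℕ) : Finset (Fin n → Bool × Bool) :=
  Finset.univ.filter fun φ => ∃ H, IsHeight φ H ∧ H 0 = h

theorem mem_flagWords {h : ℕ} : φ ∈ flagWords n h ↔ ∃ H, IsHeight φ H ∧ H 0 = h := by
  simp [flagWords]

theorem mem_flagWords_zero {φ : Fin 0 → Bool × Bool} {h : ℕ} : φ ∈ flagWords 0 h ↔ h = 0 := by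
  rw [mem_flagWords]
  constructor
  · rintro ⟨H, hH, rfl⟩
    exact hH.last
  · rintro rfl
    exact ⟨0, ⟨finZeroElim, finZeroElim, rfl⟩, rfl⟩

theorem cons_mem_flagWords {a : Bool × Bool} {h : ℕ} :
    (Fin.cons a φ : Fin (n + 1) → Bool × Bool) ∈ flagWords (n + 1) h ↔
      0 < h + a.1.toNat ∧ φ ∈ flagWords n (h + a.1.toNat - a.2.toNat) := by
  simp only [mem_flagWords, isHeight_cons_iff]
  constructor
  · rintro ⟨H, ⟨⟨step, pos⟩, hH⟩, rfl⟩
    exact ⟨pos, _, hH, by simp only [zero_add]; omega⟩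
  · rintro ⟨pos, H, hH, hh⟩
    have := Bool.toNat_le a.2
    exact ⟨fun k => k.casesOn h H, ⟨⟨show H 0 + _ = h + _ by omega, pos⟩, hH⟩, rfl⟩

theorem sum_flagWords_succ {R : Type*} [AddCommMonoid R] (n h : ℕ)
    (f : (Fin (n + 1) → Bool × Bool) → R) :
    ∑ φ ∈ flagWords (n + 1) h, f φ = ∑ a : Bool × Bool, if 0 < h + a.1.toNat then
      ∑ φ ∈ flagWords n (h + a.1.toNat - a.2.toNat), f (Fin.cons a φ) else 0 := by
  rw [← Finset.univ_inter (flagWords _ _), ← Finset.sum_ite_mem,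
    ← (Fin.consEquiv fun _ => Bool × Bool).sum_comp, Fintype.sum_prod_type]
  refine Finset.sum_congr rfl fun a _ => ?_
  simp only [Fin.consEquiv, Equiv.coe_fn_mk, cons_mem_flagWords]
  split_ifs with pos <;> simp [pos]

/-- The number of blocks that are open at `i`, the block of `i` included. -/
def level (φ : Fin n → Bool × Bool) (H : ℕ → ℕ) (i : Fin n) : ℕ :=
  H i + (φ i).1.toNat

/-- Two positions are linked if they have the same level and the block carrying it is not closed
in between. -/
def Linked (φ : Fin n → Bool × Bool) (H : ℕ → ℕ) (i j : Fin n) : Prop :=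
  level φ H i = level φ H j ∧ ∀ k ∈ Set.uIoc (i : ℕ) j, level φ H i ≤ H k

theorem linked_equivalence (φ : Fin n → Bool × Bool) (H : ℕ → ℕ) :
    Equivalence (Linked φ H) where
  refl i := ⟨rfl, by simp⟩
  symm := fun ⟨h, hk⟩ => ⟨h.symm, fun k hk' => h ▸ hk k (by rwa [Set.uIoc_comm])⟩
  trans := by
    rintro i j l ⟨hij, hk⟩ ⟨hjl, hk'⟩
    refine ⟨hij.trans hjl, fun k hil => ?_⟩
    rw [Set.mem_uIoc] at hil
    simp only [Set.mem_uIoc] at hk hk'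
    by_cases h : (i : ℕ) < k ∧ k ≤ j ∨ (j : ℕ) < k ∧ k ≤ i
    · exact hk k h
    · exact hij ▸ hk' k (by omega)

theorem linked_iff_of_lt {i j : Fin n} (hij : i < j) :
    Linked φ H i j ↔ level φ H i = level φ H j ∧ ∀ k : ℕ, i < k → k ≤ j → level φ H i ≤ H k := by
  simp [Linked, Set.uIoc_of_le (show (i : ℕ) ≤ j from hij.le)]

theorem isNonCrossing_classes_linked (φ : Fin n → Bool × Bool) (H : ℕ → ℕ) :
    IsNonCrossing (classes (Linked φ H)) := by
  intro a b c d hab hbc hcd t ht u hu hat hct hbu hdu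
  have hr := linked_equivalence φ H
  have hac : Linked φ H a c := (sameBlock_classes hr).1 ⟨t, ht, hat, hct⟩
  have hbd : Linked φ H b d := (sameBlock_classes hr).1 ⟨u, hu, hbu, hdu⟩
  have hac' := (linked_iff_of_lt (hab.trans hbc)).1 hac
  have hbd' := (linked_iff_of_lt (hbc.trans hcd)).1 hbd
  have h_le : level φ H a ≤ level φ H b := (hac'.2 b hab hbc.le).trans (Nat.le_add_right _ _)
  have h_ge : level φ H b ≤ level φ H a :=
    (hbd'.2 c hbc hcd.le).trans ((Nat.le_add_right _ _).trans_eq hac'.1.symm)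
  have hlinked : Linked φ H a b := (linked_iff_of_lt hab).2
    ⟨h_le.antisymm h_ge, fun k hk hk' => hac'.2 k hk (hk'.trans hbc.le)⟩
  have hP := isPartition_classes hr
  have hbt : b ∈ t := (hP.sameBlock_iff_mem ht hat).1 ((sameBlock_classes hr).2 hlinked)
  exact (hP.2 b).unique ⟨ht, hbt⟩ ⟨hu, hbu⟩

theorem exists_last_lt {H : ℕ → ℕ} {l i : ℕ} (h₀ : H 0 < l) (hi : l ≤ H i) :
    ∃ k < i, H k < l ∧ ∀ m, k < m → m ≤ i → l ≤ H m := by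
  have hk := Nat.findGreatest_spec (P := fun k => H k < l) i.zero_le h₀
  refine ⟨_, (Nat.findGreatest_le i).lt_of_ne fun h => ?_, hk, fun m hkm hmi =>
    not_lt.1 (Nat.findGreatest_is_greatest (P := fun k => H k < l) hkm hmi)⟩
  rw [h] at hk
  exact absurd hi (not_le.2 hk)

theorem exists_first_lt {H : ℕ → ℕ} {l i n : ℕ} (hi : l ≤ H i) (hn : H n < l) (hin : i ≤ n) :
    ∃ k, i ≤ k ∧ k < n ∧ H (k + 1) < l ∧ ∀ m, i ≤ m → m ≤ k → l ≤ H m := by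
  have hex : ∃ k, i ≤ k ∧ H (k + 1) < l := by
    obtain rfl | hlt := hin.eq_or_lt
    · exact absurd hn (not_lt.2 hi)
    · exact ⟨n - 1, Nat.le_sub_one_of_lt hlt, by rwa [Nat.sub_add_cancel (by omega)]⟩
  obtain ⟨hik, hk⟩ := Nat.find_spec hex
  have hgt : ∀ m, i ≤ m → m ≤ Nat.find hex → l ≤ H m := by
    intro m him hmk
    obtain rfl | hlt := him.eq_or_lt
    · exact hi
    · have := Nat.find_min hex (m := m - 1) (by omega)
      grind
  exact ⟨_, hik, by by_contra! h; exact absurd (hgt n hin h) (not_le.2 hn), hk, hgt⟩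

theorem IsHeight.isBlockMin_classes_linked_iff (hH : IsHeight φ H) (h₀ : H 0 = 0) (i : Fin n) :
    IsBlockMin (classes (Linked φ H)) i ↔ (φ i).1 = true := by
  simp only [isBlockMin_iff_sameBlock, sameBlock_classes (linked_equivalence φ H)]
  constructor
  · contrapose!
    intro hi
    have level_eq : level φ H i = H i := by simp [level, hi]
    obtain ⟨k, hki, hk, hgt⟩ := exists_last_lt (h₀.trans_lt (hH.pos i)) level_eq.le
    let j : Fin n := ⟨k, hki.trans i.2⟩
    have level_j : level φ H j = level φ H i := by
      have := hH.step j
      have := hgt (k + 1) k.lt_succ_self hki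
      have := Bool.toNat_le (φ j).1
      grind [level]
    exact ⟨j, (linked_equivalence φ H).symm
      ((linked_iff_of_lt hki).2 ⟨level_j, fun m hkm hmi => level_j ▸ hgt m hkm hmi⟩), hki⟩
  · intro hi j hij
    by_contra! hji
    have := ((linked_iff_of_lt hji).1 ((linked_equivalence φ H).symm hij))
    have := this.2 i hji le_rfl
    grind [level]

theorem IsHeight.isBlockMax_classes_linked_iff (hH : IsHeight φ H) (i : Fin n) :
    IsBlockMax (classes (Linked φ H)) i ↔ (φ i).2 = true := by
  simp only [isBlockMax_iff_sameBlock, sameBlock_classes (linked_equivalence φ H)]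
  constructor
  · contrapose!
    intro hi
    have level_eq : level φ H i = H (i + 1) := by simpa [level, hi] using (hH.step i).symm
    obtain ⟨k, hik, hkn, hk, hgt⟩ := exists_first_lt level_eq.le (hH.last.trans_lt (hH.pos i)) i.2
    let j : Fin n := ⟨k, hkn⟩
    have level_j : level φ H i = level φ H j := by
      have := hH.step j
      have := hgt k hik le_rfl
      have := Bool.toNat_le (φ j).2
      grind [level]
    exact ⟨j, (linked_iff_of_lt hik).2 ⟨level_j, fun m him hmk => hgt m him hmk⟩, hik⟩
  · intro hi j hij
    by_contra! hji
    have := ((linked_iff_of_lt hji).1 hij).2 (i + 1) i.val.lt_succ_self hji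
    have := hH.step i
    grind [level]

/-- The pairs of truth values telling whether a point is the least, respectively the greatest,
element of its block of `P`. -/
def flags (P : Finset (Finset (Fin n))) (i : Fin n) : Bool × Bool :=
  (decide (IsBlockMin P i), decide (IsBlockMax P i))

theorem IsHeight.flags_classes_linked (hH : IsHeight φ H) (h₀ : H 0 = 0) :
    flags (classes (Linked φ H)) = φ := by
  ext i <;> simp [flags, hH.isBlockMin_classes_linked_iff h₀, hH.isBlockMax_classes_linked_iff]

end Height

section OpenBlocks

variable {n : ℕ} {P : Finset (Finset (Fin n))}

/-- The blocks of `P` that are open between the positions `k - 1` and `k`. -/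
def openBlocks (P : Finset (Finset (Fin n))) (k : ℕ) : Finset (Finset (Fin n)) :=
  P.filter fun t => (∃ i ∈ t, (i : ℕ) < k) ∧ ∃ j ∈ t, k ≤ (j : ℕ)

theorem mem_openBlocks {t : Finset (Fin n)} {k : ℕ} :
    t ∈ openBlocks P k ↔ t ∈ P ∧ (∃ i ∈ t, (i : ℕ) < k) ∧ ∃ j ∈ t, k ≤ (j : ℕ) :=
  Finset.mem_filter

theorem IsPartition.card_insert_openBlocks (hP : IsPartition P) {t : Finset (Fin n)} (ht : t ∈ P)
    {i : Fin n} (hi : i ∈ t) :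
    (insert t (openBlocks P i)).card = (openBlocks P i).card + (flags P i).1.toNat := by
  have hmin : IsBlockMin P i ↔ t ∉ openBlocks P i := by
    rw [hP.isBlockMin_iff ht hi, mem_openBlocks]
    grind
  by_cases h : IsBlockMin P i <;> simp [flags, Finset.card_insert_eq_ite, ← hmin, h]

theorem IsPartition.card_insert_openBlocks_succ (hP : IsPartition P) {t : Finset (Fin n)}
    (ht : t ∈ P) {i : Fin n} (hi : i ∈ t) :
    (insert t (openBlocks P (i + 1))).card =
      (openBlocks P (i + 1)).card + (flags P i).2.toNat := by
  have hmax : IsBlockMax P i ↔ t ∉ openBlocks P (i + 1) := by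
    rw [hP.isBlockMax_iff ht hi, mem_openBlocks]
    grind
  by_cases h : IsBlockMax P i <;> simp [flags, Finset.card_insert_eq_ite, ← hmax, h]

theorem IsPartition.insert_openBlocks_succ (hP : IsPartition P) {t : Finset (Fin n)} (ht : t ∈ P)
    {i : Fin n} (hi : i ∈ t) :
    insert t (openBlocks P (i + 1)) = insert t (openBlocks P i) := by
  ext u
  simp only [Finset.mem_insert, mem_openBlocks]
  by_cases hut : u = t
  · simp [hut]
  by_cases huP : u ∈ P
  · have hiu : i ∉ u := fun hiu => hut ((hP.2 i).unique ⟨huP, hiu⟩ ⟨ht, hi⟩)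
    simp only [hut, huP, true_and, false_or]
    grind
  · simp [hut, huP]

theorem IsPartition.isHeight_card_openBlocks (hP : IsPartition P) :
    IsHeight (flags P) fun k => (openBlocks P k).card where
  step i := by
    obtain ⟨t, ⟨ht, hi⟩, -⟩ := hP.2 i
    rw [← hP.card_insert_openBlocks ht hi, ← hP.card_insert_openBlocks_succ ht hi,
      hP.insert_openBlocks_succ ht hi]
  pos i := by
    obtain ⟨t, ⟨ht, hi⟩, -⟩ := hP.2 i
    rw [← hP.card_insert_openBlocks ht hi]
    exact Finset.card_pos.2 ⟨t, Finset.mem_insert_self _ _⟩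
  last := by
    simp only [Finset.card_eq_zero, Finset.eq_empty_iff_forall_notMem, mem_openBlocks]
    grind

theorem insert_openBlocks_subset (hP : IsPartition P) (hNC : IsNonCrossing P)
    {t : Finset (Fin n)} (ht : t ∈ P) {i j : Fin n} (hi : i ∈ t) (hj : j ∈ t) {k : ℕ}
    (hik : i < k) (hkj : k ≤ j) : insert t (openBlocks P i) ⊆ openBlocks P k := by
  intro u hu
  obtain rfl | hut := eq_or_ne u t
  · exact mem_openBlocks.2 ⟨ht, ⟨i, hi, hik⟩, j, hj, hkj⟩
  obtain ⟨huP, ⟨a, hau, hai⟩, b, hbu, hib⟩ :=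
    mem_openBlocks.1 ((Finset.mem_insert.1 hu).resolve_left hut)
  refine mem_openBlocks.2 ⟨huP, ⟨a, hau, hai.trans hik⟩, b, hbu, ?_⟩
  by_contra! hbk
  have hib' : i < b := lt_of_le_of_ne hib fun h =>
    hut ((hP.2 i).unique ⟨huP, h ▸ hbu⟩ ⟨ht, hi⟩)
  exact hut (hNC a i b j hai hib' (hbk.trans_le hkj) u huP t ht hau hbu hi hj)

theorem insert_openBlocks_eq (hP : IsPartition P) (hNC : IsNonCrossing P)
    {t : Finset (Fin n)} (ht : t ∈ P) {i j : Fin n} (hi : i ∈ t) (hj : j ∈ t) (hij : i < j) :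
    insert t (openBlocks P i) = insert t (openBlocks P j) := by
  refine ((insert_openBlocks_subset hP hNC ht hi hj hij le_rfl).trans
    (Finset.subset_insert _ _)).antisymm fun u hu => ?_
  obtain rfl | hut := eq_or_ne u t
  · exact Finset.mem_insert_self _ _
  obtain ⟨huP, ⟨a, hau, haj⟩, b, hbu, hjb⟩ :=
    mem_openBlocks.1 ((Finset.mem_insert.1 hu).resolve_left hut)
  refine Finset.mem_insert_of_mem (mem_openBlocks.2 ⟨huP, ⟨a, hau, ?_⟩, b, hbu, hij.le.trans hjb⟩)
  by_contra! hia
  have hne : ∀ c ∈ t, c ∉ u := fun c hct hcu => hut ((hP.2 c).unique ⟨huP, hcu⟩ ⟨ht, hct⟩)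
  have hia' : i < a := lt_of_le_of_ne hia fun h => hne i hi (h ▸ hau)
  have hjb' : j < b := lt_of_le_of_ne hjb fun h => hne j hj (h ▸ hbu)
  exact hut (hNC i a j b hia' haj hjb' t ht u huP hi hj hau hbu).symm

theorem IsHeight.eq_card_openBlocks {H : ℕ → ℕ} (hP : IsPartition P) (hH : IsHeight (flags P) H)
    (h₀ : H 0 = 0) {k : ℕ} (hk : k ≤ n) : H k = (openBlocks P k).card :=
  hH.eq_of_le hP.isHeight_card_openBlocks (by simp [h₀, openBlocks]) hk

theorem IsHeight.linked_of_sameBlock {H : ℕ → ℕ} (hP : IsPartition P) (hNC : IsNonCrossing P)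
    (hH : IsHeight (flags P) H) (h₀ : H 0 = 0) {i j : Fin n} (h : SameBlock P i j) :
    Linked (flags P) H i j := by
  wlog hij : i < j generalizing i j
  · obtain rfl | hji := (not_lt.1 hij).eq_or_lt
    · exact (linked_equivalence _ _).refl _
    · obtain ⟨t, ht, hi, hj⟩ := h
      exact (linked_equivalence _ _).symm (this ⟨t, ht, hj, hi⟩ hji)
  obtain ⟨t, ht, hi, hj⟩ := h
  have level_eq {l : Fin n} (hl : l ∈ t) :
      level (flags P) H l = (insert t (openBlocks P l)).card := by
    rw [hP.card_insert_openBlocks ht hl, level, hH.eq_card_openBlocks hP h₀ l.2.le]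
  rw [linked_iff_of_lt hij, level_eq hi, level_eq hj]
  refine ⟨congrArg _ (insert_openBlocks_eq hP hNC ht hi hj hij), fun k hik hkj => ?_⟩
  rw [hH.eq_card_openBlocks hP h₀ (hkj.trans j.2.le)]
  exact Finset.card_le_card (insert_openBlocks_subset hP hNC ht hi hj hik hkj)

theorem IsHeight.sameBlock_iff_linked {H : ℕ → ℕ} (hP : IsPartition P) (hNC : IsNonCrossing P)
    (hH : IsHeight (flags P) H) (h₀ : H 0 = 0) {i j : Fin n} :
    SameBlock P i j ↔ Linked (flags P) H i j := by
  refine ⟨hH.linked_of_sameBlock hP hNC h₀, fun hij => ?_⟩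
  have hr := linked_equivalence (flags P) H
  have eq_of_linked {k l : Fin n} (hk : IsBlockMin P k) (hl : IsBlockMin P l)
      (hkl : Linked (flags P) H k l) : k = l := by
    have hk' := (hH.isBlockMin_classes_linked_iff h₀ k).2 (decide_eq_true hk)
    have hl' := (hH.isBlockMin_classes_linked_iff h₀ l).2 (decide_eq_true hl)
    simp only [isBlockMin_iff_sameBlock, sameBlock_classes hr] at hk' hl'
    exact (hk' l hkl).antisymm (hl' k (hr.symm hkl))
  obtain ⟨k, hik, hk⟩ := hP.exists_isBlockMin i
  obtain ⟨l, hjl, hl⟩ := hP.exists_isBlockMin j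
  obtain rfl := eq_of_linked hk hl <| hr.trans (hr.symm (hH.linked_of_sameBlock hP hNC h₀ hik))
    (hr.trans hij (hH.linked_of_sameBlock hP hNC h₀ hjl))
  obtain ⟨t, ht, hi, hkt⟩ := hik
  obtain ⟨u, hu, hj, hku⟩ := hjl
  exact ⟨t, ht, hi, (hP.2 k).unique ⟨hu, hku⟩ ⟨ht, hkt⟩ ▸ hj⟩

theorem mem_NC : P ∈ NC n ↔ IsPartition P ∧ IsNonCrossing P := by
  simp [NC]

theorem bijOn_flags_NC :
    Set.BijOn flags (NC n : Set (Finset (Finset (Fin n)))) (flagWords n 0) := by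
  refine ⟨fun P hP => ?_, fun P hP Q hQ hPQ => ?_, fun φ hφ => ?_⟩
  · have hP' := (mem_NC.1 hP).1
    exact mem_flagWords.2 ⟨_, hP'.isHeight_card_openBlocks, by simp [openBlocks]⟩
  · obtain ⟨hP, hPN⟩ := mem_NC.1 hP
    obtain ⟨hQ, hQN⟩ := mem_NC.1 hQ
    have hH := hP.isHeight_card_openBlocks
    have h₀ : (openBlocks P 0).card = 0 := by simp [openBlocks]
    rw [← hP.classes_sameBlock, ← hQ.classes_sameBlock]
    congr 1
    ext i j
    rw [hH.sameBlock_iff_linked hP hPN h₀, hPQ,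
      IsHeight.sameBlock_iff_linked hQ hQN (hPQ ▸ hH) h₀]
  · obtain ⟨H, hH, h₀⟩ := mem_flagWords.1 hφ
    exact ⟨classes (Linked φ H), mem_NC.2 ⟨isPartition_classes (linked_equivalence φ H),
      isNonCrossing_classes_linked φ H⟩, hH.flags_classes_linked h₀⟩

theorem sum_NC_flags {R : Type*} [AddCommMonoid R] (n : ℕ) (f : (Fin n → Bool × Bool) → R) :
    ∑ P ∈ NC n, f (flags P) = ∑ φ ∈ flagWords n 0, f φ :=
  Finset.sum_nbij flags bijOn_flags_NC.mapsTo bijOn_flags_NC.injOn bijOn_flags_NC.surjOn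
    fun _ _ => rfl

end OpenBlocks

/-! ### The recursion over the block of the first variable -/

section TransferSum

variable {B M : Type*} [Ring B] [Algebra ℂ B] [Ring M] [Algebra ℂ M] (κ : List M → B)
  (ι : B →ₐ[ℂ] M)

/-- Insert the value `b` of a closed bracket into a state of `bracketingStep`: it is multiplied
into the innermost open bracket or, if there is none, into the outer product. -/
def insertValue (b : B) : List (List M) × B → List (List M) × B
  | ([], acc) => ([], acc * b)
  | (us :: st, acc) => (closeArg ι b us :: st, acc)

/-- The step of `bracketingStep` at a point with flags `a` and argument `y`. -/
def flagStep (s : List (List M) × B) (a : Bool × Bool) (y : M) : List (List M) × B :=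
  match if a.1 then [] :: s.1 else s.1 with
  | [] => ([], s.2)
  | us :: st =>
      if a.2 then insertValue ι (κ (y :: us).reverse) (st, s.2) else ((y :: us) :: st, s.2)

theorem bracketingStep_eq_flagStep {n : ℕ} (P : Finset (Finset (Fin n))) (m : Fin n → M)
    (s : List (List M) × B) (i : Fin n) :
    bracketingStep κ ι P m s i = flagStep κ ι s (flags P i) (m i) := by
  unfold bracketingStep flagStep flags insertValue
  rcases s with ⟨_ | ⟨us, _ | ⟨vs, st⟩⟩, acc⟩ <;>
    by_cases hmin : IsBlockMin P i <;> by_cases hmax : IsBlockMax P i <;> simp [hmin, hmax]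

theorem length_insertValue (b : B) (s : List (List M) × B) :
    (insertValue ι b s).1.length = s.1.length := by
  rcases s with ⟨_ | ⟨us, st⟩, acc⟩ <;> rfl

theorem length_flagStep (s : List (List M) × B) (a : Bool × Bool) (y : M) :
    (flagStep κ ι s a y).1.length = s.1.length + a.1.toNat - a.2.toNat := by
  rcases s with ⟨_ | ⟨us, st⟩, acc⟩ <;> rcases a with ⟨_ | _, _ | _⟩ <;>
    simp [flagStep, length_insertValue]

/-- The sum of the values of all admissible runs of `flagStep` over a list of arguments. -/
def transferSum : List M → List (List M) × B → B
  | [], s => if s.1.length = 0 then s.2 else 0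
  | y :: l, s => ∑ a : Bool × Bool,
      if 0 < s.1.length + a.1.toNat then transferSum l (flagStep κ ι s a y) else 0

theorem sum_flagWords_foldl_flagStep {n : ℕ} (m : Fin n → M) (s : List (List M) × B) :
    ∑ φ ∈ flagWords n s.1.length,
        ((List.finRange n).foldl (fun s i => flagStep κ ι s (φ i) (m i)) s).2 =
      transferSum κ ι (List.ofFn m) s := by
  induction n generalizing s with
  | zero =>
    rw [← Finset.univ_inter (flagWords _ _), ← Finset.sum_ite_mem]
    simp [mem_flagWords_zero, transferSum]
  | succ n ih =>
    simp only [sum_flagWords_succ, List.ofFn_succ, transferSum, List.finRange_succ, List.foldl_cons,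
      List.foldl_map, Fin.cons_zero, Fin.cons_succ, ← ih, length_flagStep]

theorem sum_NC_bracketing {n : ℕ} (m : Fin n → M) :
    ∑ P ∈ NC n, bracketing κ ι P m = transferSum κ ι (List.ofFn m) ([], 1) := by
  have bracketing_eq (P) : bracketing κ ι P m =
      ((List.finRange n).foldl (fun s i => flagStep κ ι s (flags P i) (m i)) ([], 1)).2 := by
    simp only [bracketing, ← bracketingStep_eq_flagStep]
  simp only [bracketing_eq, ← sum_flagWords_foldl_flagStep]
  exact sum_NC_flags n fun φ =>
    ((List.finRange n).foldl (fun s i => flagStep κ ι s (φ i) (m i)) ([], 1)).2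

/-- The part of `transferSum` in which the next argument `y` is read into the open bracket `us`. -/
def transferSumReading (l : List M) (y : M) (us : List M) (s : List (List M) × B) : B :=
  transferSum κ ι l ((y :: us) :: s.1, s.2) +
    transferSum κ ι l (insertValue ι (κ (y :: us).reverse) s)

theorem transferSum_cons_nil (y : M) (l : List M) (acc : B) :
    transferSum κ ι (y :: l) ([], acc) = transferSumReading κ ι l y [] ([], acc) := by
  simp [transferSum, transferSumReading, flagStep, Fintype.sum_prod_type, add_comm]

theorem transferSum_cons_cons (y : M) (l us : List M) (st : List (List M)) (acc : B) :
    transferSum κ ι (y :: l) (us :: st, acc) =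
      transferSumReading κ ι l y [] (us :: st, acc) + transferSumReading κ ι l y us (st, acc) := by
  simp [transferSum, transferSumReading, flagStep, Fintype.sum_prod_type]
  abel

theorem transferSum_mul (c : B) (l : List M) (st : List (List M)) (acc : B) :
    transferSum κ ι l (st, c * acc) = c * transferSum κ ι l (st, acc) := by
  induction l generalizing st acc with
  | nil => cases st <;> simp [transferSum]
  | cons y l ih =>
    rcases st with _ | ⟨us, _ | ⟨vs, st⟩⟩ <;>
      simp only [transferSum_cons_nil, transferSum_cons_cons, transferSumReading, insertValue,
        mul_assoc, ih, mul_add]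

end TransferSum

section FirstBlock

variable {B M : Type*} [Ring B] [Algebra ℂ B] [Ring M] [Algebra ℂ M] {ι : B →ₐ[ℂ] M}
  (E : M →ₗ[ℂ] B) (κ : MultiplicativeMap ι)

/-- The sum of `κ (P ++ [x * ι (E g₀), y₁ * ι (E g₁), …, yᵣ * ι (E gᵣ)])` over all ways of writing
the list `l` as `l₀, y₁, l₁, …, yᵣ, lᵣ`, where `gⱼ` is the product of `lⱼ`, with `g` as an
additional left factor of `g₀`. In the first moment of `x` followed by `l` the `yⱼ` are the
arguments that lie in the block of `x`. -/
def firstBlockSum : List M → List M → M → M → B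
  | [], P, x, g => κ.toFun (P ++ [x * ι (E g)])
  | y :: l, P, x, g => firstBlockSum l (P ++ [x * ι (E g)]) y 1 + firstBlockSum l P x (g * y)

theorem firstBlockSum_add (l P : List M) (a b : M) (Q : List M) (x g : M) :
    firstBlockSum E κ l (P ++ (a + b) :: Q) x g =
      firstBlockSum E κ l (P ++ a :: Q) x g + firstBlockSum E κ l (P ++ b :: Q) x g := by
  induction l generalizing Q x g with
  | nil => simp only [firstBlockSum, List.append_assoc, List.cons_append, κ.map_add]
  | cons y l ih =>
    simp only [firstBlockSum, List.append_assoc, List.cons_append, ih]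
    abel

/-- The part of `firstBlockSum` in which the head of the list is read into the block. -/
def nextBlockSum (P : List M) : List M → B
  | [] => 0
  | y :: l => firstBlockSum E κ l P y 1

theorem nextBlockSum_add (P : List M) (a b : M) (l : List M) :
    nextBlockSum E κ (P ++ [a + b]) l =
      nextBlockSum E κ (P ++ [a]) l + nextBlockSum E κ (P ++ [b]) l := by
  cases l with
  | nil => simp [nextBlockSum]
  | cons y l => exact firstBlockSum_add E κ l P a b [] y 1

theorem nextBlockSum_zero (P l : List M) : nextBlockSum E κ (P ++ [0]) l = 0 := by
  simpa using nextBlockSum_add E κ P 0 0 l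

theorem firstBlockSum_eq_sum (l P : List M) (x g : M) :
    firstBlockSum E κ l P x g = κ.toFun (P ++ [x * ι (E (g * l.prod))]) +
      ∑ k ∈ Finset.range (l.length + 1),
        nextBlockSum E κ (P ++ [x * ι (E (g * (l.take k).prod))]) (l.drop k) := by
  induction l generalizing g with
  | nil => simp [firstBlockSum, nextBlockSum]
  | cons y l ih =>
    rw [firstBlockSum, ih, List.length_cons, Finset.sum_range_succ' _ (l.length + 1)]
    simp only [List.take_succ_cons, List.drop_succ_cons, List.take_zero, List.drop_zero,
      List.prod_cons, List.prod_nil, mul_one, mul_assoc, nextBlockSum]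
    abel

variable {E κ}

theorem transferSum_eq_expectation (hκ : IsCumulantMap ι E κ) (hE : IsCondExp ι E) (l : List M) :
    transferSum κ.toFun ι l ([], 1) = E l.prod := by
  cases l with
  | nil => simp [transferSum, hE.1]
  | cons y l =>
    have := hκ (y :: l).length (y :: l).get l.length.succ_pos
    rw [sum_NC_bracketing, List.ofFn_get, List.map_get_finRange] at this
    exact this.symm

theorem transferSum_singleton (hκ : IsCumulantMap ι E κ) (hE : IsCondExp ι E) (l P : List M) (x : M)
    (hsplit : transferSum κ.toFun ι l ([x :: P.reverse], 1) = ∑ k ∈ Finset.range (l.length + 1),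
      nextBlockSum E κ (P ++ [x * ι (transferSum κ.toFun ι (l.take k) ([], 1))]) (l.drop k)) :
    transferSumReading κ.toFun ι l x P.reverse ([], 1) = firstBlockSum E κ l P x 1 := by
  simp only [transferSumReading, insertValue, List.reverse_cons, List.reverse_reverse]
  rw [one_mul, ← mul_one (κ.toFun _), transferSum_mul, firstBlockSum_eq_sum, hsplit, add_comm]
  simp only [transferSum_eq_expectation hκ hE, one_mul, κ.B_right]

theorem transferSum_bottom (hκ : IsCumulantMap ι E κ) (hE : IsCondExp ι E) (l : List M)
    (st : List (List M)) (x : M) (c : B) (P : List M) :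
    transferSum κ.toFun ι l (st ++ [x * ι c :: P.reverse], 1) =
      ∑ k ∈ Finset.range (l.length + 1),
        nextBlockSum E κ (P ++ [x * ι (transferSum κ.toFun ι (l.take k) (st, c))]) (l.drop k) := by
  induction l generalizing st x c P with
  | nil => cases st <;> simp [transferSum, nextBlockSum]
  | cons y l ih =>
    have reading (us : List M) (st : List (List M)) :
        transferSumReading κ.toFun ι l y us (st ++ [x * ι c :: P.reverse], 1) =
          ∑ k ∈ Finset.range (l.length + 1), nextBlockSum E κ
            (P ++ [x * ι (transferSumReading κ.toFun ι (l.take k) y us (st, c))]) (l.drop k) := by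
      simp only [transferSumReading, map_add, mul_add, nextBlockSum_add, Finset.sum_add_distrib]
      rw [← List.cons_append, ih]
      congr 1
      rcases st with _ | ⟨vs, st⟩
      · simpa [insertValue, closeArg, mul_assoc] using ih [] x (c * κ.toFun (y :: us).reverse) P
      · exact ih (closeArg ι _ vs :: st) x c P
    rw [List.length_cons, Finset.sum_range_succ']
    simp only [List.take_succ_cons, List.drop_succ_cons, List.take_zero, List.drop_zero]
    rcases st with _ | ⟨vs, st⟩
    · have := transferSum_singleton hκ hE l (P ++ [x * ι c]) y
        (by simpa using ih [] y 1 (P ++ [x * ι c]))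
      simp only [List.nil_append, transferSum_cons_nil, transferSum_cons_cons, ← reading]
      congr 1
      simpa [transferSumReading, insertValue, transferSum, nextBlockSum] using this
    · simp only [List.cons_append, transferSum_cons_cons, map_add, mul_add, nextBlockSum_add,
        Finset.sum_add_distrib, ← reading]
      simp [transferSum, nextBlockSum_zero]

theorem expectation_eq_firstBlockSum (hκ : IsCumulantMap ι E κ) (hE : IsCondExp ι E) (x : M)
    (l : List M) : E (x * l.prod) = firstBlockSum E κ l [] x 1 := by
  rw [← List.prod_cons, ← transferSum_eq_expectation hκ hE, transferSum_cons_nil]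
  exact transferSum_singleton hκ hE l [] x (by simpa using transferSum_bottom hκ hE l [] x 1 [])

end FirstBlock

/-! ### Conditional expectations -/

section IsCondExp

variable {B M : Type*} [Ring B] [Algebra ℂ B] [Ring M] [Algebra ℂ M] {ι : B →ₐ[ℂ] M} {E : M →ₗ[ℂ] B}

theorem IsCondExp.apply_ι_mul (hE : IsCondExp ι E) (b : B) (m : M) : E (ι b * m) = b * E m := by
  simpa using hE.2 b 1 m

theorem IsCondExp.apply_mul_ι (hE : IsCondExp ι E) (m : M) (b : B) : E (m * ι b) = E m * b := by
  simpa using hE.2 1 b m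

theorem IsCondExp.apply_ι (hE : IsCondExp ι E) (b : B) : E (ι b) = b := by
  simpa [hE.1] using hE.apply_ι_mul b 1

theorem IsCondExp.comp {B' : Type*} [Ring B'] [Algebra ℂ B'] {j : B' →ₐ[ℂ] B} {φ : B →ₗ[ℂ] B'}
    (hφ : IsCondExp j φ) (hE : IsCondExp ι E) : IsCondExp (ι.comp j) (φ ∘ₗ E) := by
  refine ⟨by simp [hE.1, hφ.1], fun b b' m => ?_⟩
  simp [hE.2, hφ.2]

end IsCondExp

/-! ### Lists and tuples of coefficients -/

section TupleList

variable {α B : Type*}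

/-- The list of the variables `i₁, …, iₖ` with the coefficients `b₁, …, bₖ`; the last index of `i`
is not used. -/
def tupleList {k : ℕ} (i : Fin (k + 1) → α) (b : Fin k → B) : List (α × B) :=
  (List.finRange k).map fun l => (i l.castSucc, b l)

theorem forall_list_iff_forall_tuple {p : List (α × B) → α → Prop} : (∀ P x, p P x) ↔
    ∀ (k : ℕ) (i : Fin (k + 1) → α) (b : Fin k → B), p (tupleList i b) (i (Fin.last k)) := by
  refine ⟨fun h k i b => h _ _, fun h P x => ?_⟩
  simpa [tupleList] using
    h P.length (Fin.snoc (fun l : Fin P.length => (P.get l).1) x) fun l => (P.get l).2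

end TupleList

/-! ### State functions and the lifted algebra -/

/-- The functions of a list of variables with coefficients and of one further variable which are
linear in each of the coefficients. -/
def CoeffLinear (α B V : Type*) [Ring B] [Algebra ℂ B] [AddCommGroup V] [Module ℂ V] :
    Submodule ℂ (List (α × B) → α → V) where
  carrier := {c | ∀ P i Q x, IsLinearMap ℂ fun b => c (P ++ (i, b) :: Q) x}
  add_mem' hc hc' P i Q x := ((hc P i Q x).mk' _ + (hc' P i Q x).mk' _).isLinear
  zero_mem' _ _ _ _ := (0 : B →ₗ[ℂ] V).isLinear
  smul_mem' a _ hc P i Q x := (a • (hc P i Q x).mk' _).isLinear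

/-- The functions `f P x g` of a state of the recursion defining `firstBlockSum`: `P` lists the
variables already in the block with the coefficients following them, `x` is the last variable in
the block, and `g` is the product of the elements read since. -/
abbrev StateFn (α B M : Type*) [Ring B] [Algebra ℂ B] [Ring M] [Algebra ℂ M] :=
  CoeffLinear α B (M →ₗ[ℂ] B)

-- Not found by instance search, which does not unify the two additive structures involved.
instance {α B M : Type*} [Ring B] [Algebra ℂ B] [Ring M] [Algebra ℂ M] :
    Ring (Module.End ℂ (StateFn α B M)) :=
  Module.End.instRing (N₁ := StateFn α B M)

/-- Pairs of an element of `M` and an action on state functions, multiplied componentwise. -/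
abbrev Lifted (α B M : Type*) [Ring B] [Algebra ℂ B] [Ring M] [Algebra ℂ M] :=
  M × Module.End ℂ (StateFn α B M)

/-- A family `X` of random variables in a `B`-probability space `(M, E)`. -/
structure RandomFamily (B M α : Type*) [Ring B] [Algebra ℂ B] [Ring M] [Algebra ℂ M] where
  ι : B →ₐ[ℂ] M
  E : M →ₗ[ℂ] B
  isCondExp : IsCondExp ι E
  X : α → M

namespace RandomFamily

variable {B M α : Type*} [Ring B] [Algebra ℂ B] [Ring M] [Algebra ℂ M] (S : RandomFamily B M α)

theorem E_one : S.E 1 = 1 := S.isCondExp.1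

theorem E_ι_mul (b : B) (m : M) : S.E (S.ι b * m) = b * S.E m := S.isCondExp.apply_ι_mul b m

theorem E_mul_ι (m : M) (b : B) : S.E (m * S.ι b) = S.E m * b := S.isCondExp.apply_mul_ι m b

theorem E_ι (b : B) : S.E (S.ι b) = b := S.isCondExp.apply_ι b

/-- The effect on state functions of reading the variable `X i`: it either joins the block or
becomes part of the elements read since the last variable of the block. -/
def readVar (i : α) : Module.End ℂ (StateFn α B M) where
  toFun f :=
    ⟨fun P x =>
      { toFun g := f.1 (P ++ [(x, S.E g)]) i 1 + f.1 P x (g * S.X i)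
        map_add' g h := by
          simp only [map_add, (f.2 P x [] i).map_add, add_mul, LinearMap.add_apply]
          abel
        map_smul' a g := by
          simp only [map_smul, (f.2 P x [] i).map_smul, smul_mul_assoc, LinearMap.smul_apply,
            smul_add, RingHom.id_apply] },
    fun P j Q x =>
      { map_add b c := by
          ext g
          simp only [LinearMap.coe_mk, AddHom.coe_mk, List.append_assoc, List.cons_append,
            (f.2 P j _ _).map_add, LinearMap.add_apply]
          abel
        map_smul a b := by
          ext g
          simp only [LinearMap.coe_mk, AddHom.coe_mk, List.append_assoc, List.cons_append,
            (f.2 P j _ _).map_smul, LinearMap.smul_apply, smul_add] }⟩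
  map_add' f f' := by
    ext P x g
    simp
    abel
  map_smul' a f := by
    ext P x g
    simp

/-- The effect on state functions of reading a coefficient. -/
def readCoeff : B →ₐ[ℂ] Module.End ℂ (StateFn α B M) where
  toFun b :=
    { toFun f := ⟨fun P x => f.1 P x ∘ₗ LinearMap.mulRight ℂ (S.ι b), fun P j Q x => by
        have := f.2 P j Q x
        exact ((LinearMap.lcomp ℂ B (LinearMap.mulRight ℂ (S.ι b))) ∘ₗ (this.mk' _)).isLinear⟩
      map_add' f f' := rfl
      map_smul' a f := rfl }
  map_one' := by ext; simp
  map_mul' b c := by ext; simp [mul_assoc]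
  map_zero' := by ext; simp
  map_add' b c := by ext; simp [mul_add]
  commutes' a := by ext; simp [Algebra.algebraMap_eq_smul_one]

/-- The lifted variable: the random variable `X i` together with the operation of reading it. -/
def liftVar (i : α) : Lifted α B M := (S.X i, S.readVar i)

/-- The lifted coefficient: the element `ι b` together with the operation of reading it. -/
def liftCoeff : B →ₐ[ℂ] Lifted α B M := S.ι.prod S.readCoeff

/-- The algebra generated by the lifted variables and the lifted coefficients from `D`. It acts on
state functions through the second component; an element of `M` has no canonical action, since its
different expressions in the variables and coefficients are read differently. -/
def liftAlgebra (D : Subalgebra ℂ B) : Subalgebra ℂ (Lifted α B M) :=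
  Algebra.adjoin ℂ (Set.range S.liftVar ∪ S.liftCoeff '' D)

/-- The algebra generated by the variables and the coefficients from `D`. -/
def varAlgebra (D : Subalgebra ℂ B) : Subalgebra ℂ M :=
  Algebra.adjoin ℂ (Set.range S.X ∪ S.ι '' D)

/-- The word `X i₁ * b₁ * ⋯ * X iₖ * bₖ` in the lifted variables and coefficients. -/
def word (w : List (α × B)) : Lifted α B M :=
  (w.map fun p => S.liftVar p.1 * S.liftCoeff p.2).prod

variable {S} {D : Subalgebra ℂ B}

theorem fst_liftVar (i : α) : (S.liftVar i).1 = S.X i := rfl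

theorem fst_liftCoeff (b : B) : (S.liftCoeff b).1 = S.ι b := rfl

theorem liftVar_mul_apply (i : α) (r : Lifted α B M) (f : StateFn α B M)
    (P : List (α × B)) (x : α) (g : M) : ((S.liftVar i * r).2 f).1 P x g =
      (r.2 f).1 (P ++ [(x, S.E g)]) i 1 + (r.2 f).1 P x (g * S.X i) := rfl

theorem liftCoeff_mul_apply (b : B) (r : Lifted α B M) (f : StateFn α B M)
    (P : List (α × B)) (x : α) (g : M) :
    ((S.liftCoeff b * r).2 f).1 P x g = (r.2 f).1 P x (g * S.ι b) := rfl

theorem word_cons (p : α × B) (w : List (α × B)) :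
    S.word (p :: w) = S.liftVar p.1 * (S.liftCoeff p.2 * S.word w) := by
  simp [word, mul_assoc]

theorem word_concat (w : List (α × B)) (p : α × B) :
    S.word (w ++ [p]) = S.word w * (S.liftVar p.1 * S.liftCoeff p.2) := by
  simp [word]

theorem fst_word (w : List (α × B)) :
    (S.word w).1 = (w.map fun p => S.X p.1 * S.ι p.2).prod := by
  induction w with
  | nil => rfl
  | cons p w ih => simp [word_cons, fst_liftVar, fst_liftCoeff, ih, mul_assoc]

theorem liftVar_mem (i : α) : S.liftVar i ∈ S.liftAlgebra D :=
  Algebra.subset_adjoin (.inl ⟨i, rfl⟩)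

theorem liftCoeff_mem {b : B} (hb : b ∈ D) : S.liftCoeff b ∈ S.liftAlgebra D :=
  Algebra.subset_adjoin (.inr ⟨b, hb, rfl⟩)

theorem liftAlgebra_mono {D' : Subalgebra ℂ B} (h : D ≤ D') : S.liftAlgebra D ≤ S.liftAlgebra D' :=
  Algebra.adjoin_mono (Set.union_subset_union_right _ (Set.image_mono h))

theorem map_fst_liftAlgebra : (S.liftAlgebra D).map (AlgHom.fst ℂ _ _) = S.varAlgebra D := by
  rw [liftAlgebra, AlgHom.map_adjoin, Set.image_union, ← Set.range_comp, Set.image_image]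
  rfl

theorem fst_mem_varAlgebra {r : Lifted α B M} (hr : r ∈ S.liftAlgebra D) :
    r.1 ∈ S.varAlgebra D :=
  map_fst_liftAlgebra (S := S) ▸ ⟨r, hr, rfl⟩

theorem exists_fst_eq {a : M} (ha : a ∈ S.varAlgebra D) : ∃ r ∈ S.liftAlgebra D, r.1 = a := by
  rwa [← map_fst_liftAlgebra] at ha

theorem word_mem {w : List (α × B)} (hw : ∀ p ∈ w, p.2 ∈ D) : S.word w ∈ S.liftAlgebra D := by
  refine list_prod_mem fun r hr => ?_
  obtain ⟨p, hp, rfl⟩ := List.mem_map.1 hr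
  exact mul_mem (liftVar_mem _) (liftCoeff_mem (hw p hp))

theorem exists_eq_liftCoeff_mul_word {r : Lifted α B M}
    (hr : r ∈ Submonoid.closure (Set.range S.liftVar ∪ S.liftCoeff '' D)) :
    ∃ b ∈ D, ∃ w : List (α × B), (∀ p ∈ w, p.2 ∈ D) ∧ r = S.liftCoeff b * S.word w := by
  induction hr using Submonoid.closure_induction_left with
  | one => exact ⟨1, one_mem _, [], by simp, by simp [word]⟩
  | mul_left s hs r _ ih =>
    obtain ⟨b, hb, w, hw, rfl⟩ := ih
    rcases hs with ⟨i, rfl⟩ | ⟨c, hc, rfl⟩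
    · exact ⟨1, one_mem _, (i, b) :: w, List.forall_mem_cons.2 ⟨hb, hw⟩, by simp [word_cons]⟩
    · exact ⟨c * b, mul_mem hc hb, w, hw, by rw [map_mul, mul_assoc]⟩

theorem liftAlgebra_induction {p : Lifted α B M → Prop}
    (add : ∀ r s, p r → p s → p (r + s)) (smul : ∀ (a : ℂ) r, p r → p (a • r))
    (word : ∀ b ∈ D, ∀ w : List (α × B), (∀ q ∈ w, q.2 ∈ D) → p (S.liftCoeff b * S.word w)) :
    ∀ r ∈ S.liftAlgebra D, p r := by
  intro r hr
  rw [liftAlgebra, ← Subalgebra.mem_toSubmodule, Algebra.adjoin_eq_span] at hr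
  induction hr using Submodule.span_induction with
  | mem r hr =>
    obtain ⟨b, hb, w, hw, rfl⟩ := exists_eq_liftCoeff_mul_word hr
    exact word b hb w hw
  | zero => simpa using smul 0 _ (word 1 (one_mem _) [] (by simp))
  | add r s _ _ hr hs => exact add r s hr hs
  | smul a r _ hr => exact smul a r hr

theorem liftAlgebra_induction_left {p : Lifted α B M → Prop} (one : p 1)
    (add : ∀ r s, p r → p s → p (r + s)) (smul : ∀ (a : ℂ) r, p r → p (a • r))
    (var : ∀ i, ∀ r ∈ S.liftAlgebra D, p r → p (S.liftVar i * r))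
    (coeff : ∀ b ∈ D, ∀ r ∈ S.liftAlgebra D, p r → p (S.liftCoeff b * r)) :
    ∀ r ∈ S.liftAlgebra D, p r := by
  refine liftAlgebra_induction add smul fun b hb w hw => coeff b hb _ (word_mem hw) ?_
  induction w with
  | nil => exact one
  | cons q w ih =>
    rw [List.forall_mem_cons] at hw
    rw [word_cons]
    exact var _ _ (mul_mem (liftCoeff_mem hw.1) (word_mem hw.2))
      (coeff _ hw.1 _ (word_mem hw.2) (ih hw.2))

theorem snd_apply_mem (K : Submodule ℂ (StateFn α B M)) (hvar : ∀ i, ∀ f ∈ K, S.readVar i f ∈ K)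
    (hcoeff : ∀ b ∈ D, ∀ f ∈ K, S.readCoeff b f ∈ K) {r : Lifted α B M}
    (hr : r ∈ S.liftAlgebra D) {f : StateFn α B M} (hf : f ∈ K) : r.2 f ∈ K := by
  refine liftAlgebra_induction_left (p := fun r => r.2 f ∈ K) hf
    (fun _ _ => add_mem) (fun a _ => K.smul_mem a) ?_ ?_ r hr
  · exact fun i r _ => hvar i _
  · exact fun b hb r _ => hcoeff b hb _

/-! ### The first block of a word -/

/-- The state function with value `c P x * E g`; if `c P x` is the cumulant of the block of the
state, then this is the contribution of the block that ends in this state. -/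
def endState (S : RandomFamily B M α) (c : CoeffLinear α B B) : StateFn α B M :=
  ⟨fun P x => LinearMap.mulLeft ℂ (c.1 P x) ∘ₗ S.E, fun P i Q x =>
    { map_add b b' := by ext g; simp [(c.2 P i Q x).map_add, add_mul]
      map_smul a b := by ext g; simp [(c.2 P i Q x).map_smul] }⟩

theorem endState_apply (c : CoeffLinear α B B) (P : List (α × B)) (x : α) (g : M) :
    (S.endState c).1 P x g = c.1 P x * S.E g := rfl

/-- The arguments `X i₁ * b₁, …, X iₖ * bₖ, X x` of a term of a cumulant series. -/
def cumulantArgs (S : RandomFamily B M α) (P : List (α × B)) (x : α) : List M :=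
  P.map (fun p => S.X p.1 * S.ι p.2) ++ [S.X x]

section Restriction

variable {B' : Type*} [Ring B'] [Algebra ℂ B'] {j : B' →ₐ[ℂ] B} (φ : B →ₗ[ℂ] B')
  (κ : MultiplicativeMap (S.ι.comp j))

/-- The list `P` with the coefficients replaced by their images under `φ`. -/
def condCoeffs (j : B' →ₐ[ℂ] B) (P : List (α × B)) : List (α × B) :=
  P.map (Prod.map id fun b => j (φ b))

/-- The cumulant series with values in `B'` evaluated at the images of the coefficients in `B'`,
as a function of the coefficients in `B`. -/
def cumulant : CoeffLinear α B B :=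
  ⟨fun P x => j (κ.toFun (S.cumulantArgs (condCoeffs φ j P) x)),
    fun P i Q x =>
      { map_add b c := by simp [cumulantArgs, condCoeffs, mul_add, κ.map_add]
        map_smul a b := by simp [cumulantArgs, condCoeffs, κ.map_smul] }⟩

theorem cumulant_apply (P : List (α × B)) (x : α) : (cumulant φ κ).1 P x =
    j (κ.toFun (S.cumulantArgs (condCoeffs φ j P) x)) := rfl

variable {φ κ}

theorem firstBlockSum_eq_word_apply (hφ : IsCondExp j φ)
    (hE : ∀ a ∈ S.varAlgebra j.range, j (φ (S.E a)) = S.E a) (b : B) (w : List (α × B))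
    (hw : ∀ p ∈ w, p.2 ∈ j.range) (P : List (α × B)) (x : α) (d : B') {g : M}
    (hg : g ∈ S.varAlgebra j.range) :
    j (firstBlockSum (φ ∘ₗ S.E) κ (w.map fun p => S.X p.1 * S.ι p.2)
        (P.map fun p => S.X p.1 * S.ι (j (φ p.2))) (S.X x * S.ι (j d)) g) * b =
      ((S.word w * S.liftCoeff b).2 (S.endState (cumulant φ κ))).1 P x (S.ι (j d) * g) := by
  have coeff_mul (d e : B') : S.ι (j d) * (S.ι.comp j) e = (S.ι.comp j) (d * e) := by
    simp
  induction w generalizing P x d g with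
  | nil =>
    have apply_nil : ((S.word [] * S.liftCoeff b).2 (S.endState (cumulant φ κ))).1 P x
        (S.ι (j d) * g) = (cumulant φ κ).1 P x * S.E (S.ι (j d) * g * S.ι b) := by
      simp only [word, List.map_nil, List.prod_nil, one_mul]
      rfl
    rw [apply_nil, E_mul_ι, E_ι_mul, ← hE g hg, cumulant_apply, List.map_nil, firstBlockSum,
      LinearMap.comp_apply, mul_assoc (S.X x), coeff_mul d (φ (S.E g)), κ.B_right]
    simp [cumulantArgs, condCoeffs, mul_assoc, Function.comp_def]
  | cons p w ih =>
    obtain ⟨⟨c, hc : j c = p.2⟩, hw⟩ := List.forall_mem_cons.1 hw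
    have hvar : S.X p.1 * S.ι p.2 ∈ S.varAlgebra j.range :=
      mul_mem (Algebra.subset_adjoin (.inl ⟨_, rfl⟩))
        (Algebra.subset_adjoin (.inr ⟨_, ⟨c, hc⟩, rfl⟩))
    have inner : S.ι (j d) * (S.ι.comp j) (φ (S.E g)) = S.ι (j (φ (S.E (S.ι (j d) * g)))) := by
      rw [coeff_mul d (φ (S.E g)), E_ι_mul, hφ.apply_ι_mul]
      rfl
    have join := ih hw (P ++ [(x, S.E (S.ι (j d) * g))]) p.1 c (one_mem _)
    have skip := ih hw P x d (mul_mem hg hvar)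
    rw [hc, List.map_append, List.map_singleton, ← inner, ← mul_assoc] at join
    rw [List.map_cons, firstBlockSum, LinearMap.comp_apply, map_add, add_mul, join, skip, word_cons,
      mul_assoc, mul_assoc, liftVar_mul_apply, liftCoeff_mul_apply, liftCoeff_mul_apply]
    simp only [mul_one, one_mul, mul_assoc]

theorem expectation_eq_endState (hφ : IsCondExp j φ)
    (hE : ∀ a ∈ S.varAlgebra j.range, j (φ (S.E a)) = S.E a)
    (hκ : IsCumulantMap (S.ι.comp j) (φ ∘ₗ S.E) κ) (x : α) (b : B) :
    ∀ a ∈ S.liftAlgebra j.range, S.E (S.X x * (a * S.liftCoeff b).1) =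
      ((a * S.liftCoeff b).2 (S.endState (cumulant φ κ))).1 [] x 1 := by
  refine liftAlgebra_induction ?_ ?_ ?_
  · intro r s hr hs
    simp only [add_mul, Prod.fst_add, mul_add, map_add, hr, hs]
    rfl
  · intro a r hr
    simp only [smul_mul_assoc, Prod.smul_fst, mul_smul_comm, map_smul, hr]
    rfl
  · rintro _ ⟨d, hd⟩ w hw
    obtain rfl : j d = _ := hd
    have mem : S.X x * (S.ι (j d) * (S.word w).1) ∈ S.varAlgebra j.range :=
      mul_mem (Algebra.subset_adjoin (.inl ⟨_, rfl⟩)) (mul_mem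
        (Algebra.subset_adjoin (.inr ⟨_, ⟨d, rfl⟩, rfl⟩)) (fst_mem_varAlgebra (word_mem hw)))
    have first := expectation_eq_firstBlockSum hκ (hφ.comp S.isCondExp) (S.X x * S.ι (j d))
      (w.map fun p => S.X p.1 * S.ι p.2)
    have apply_word := firstBlockSum_eq_word_apply (κ := κ) hφ hE b w hw [] x d (one_mem _)
    rw [List.map_nil, ← first, ← fst_word, LinearMap.comp_apply, mul_assoc, hE _ mem, mul_one]
      at apply_word
    rw [Prod.fst_mul, Prod.fst_mul, fst_liftCoeff, fst_liftCoeff, ← mul_assoc, E_mul_ι, apply_word,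
      mul_assoc (S.liftCoeff (j d)), liftCoeff_mul_apply, one_mul]

end Restriction

variable {c c' : CoeffLinear α B B}

/-! ### Characterisation of the cumulant series -/

/-- `c` is the `B`-valued cumulant series of the family: the expectation of a word in the variables
and the elements of `B` is the sum, over the possible blocks of its first variable, of `c` of the
block times the expectation of what follows the block, the expectations of the words enclosed
between consecutive elements of the block being multiplied into the coefficients. -/
def IsCumulantSeries (S : RandomFamily B M α) (c : CoeffLinear α B B) : Prop :=
  ∀ x, ∀ r ∈ S.liftAlgebra ⊤, S.E (S.X x * r.1) = (r.2 (S.endState c)).1 [] x 1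

theorem isCumulantSeries_cumulant {κ : MultiplicativeMap S.ι} (hκ : IsCumulantMap S.ι S.E κ) :
    S.IsCumulantSeries (cumulant (j := AlgHom.id ℂ B) LinearMap.id κ) := by
  intro x r hr
  have hid : IsCondExp (AlgHom.id ℂ B) LinearMap.id := ⟨rfl, fun _ _ _ => rfl⟩
  have h := expectation_eq_endState (S := S) (j := AlgHom.id ℂ B) hid (fun _ _ => rfl) hκ x 1 r
    (by rwa [(AlgHom.range_eq_top (AlgHom.id ℂ B)).2 Function.surjective_id])
  simpa using h

theorem endState_sub (c c' : CoeffLinear α B B) :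
    S.endState (c - c') = S.endState c - S.endState c' := by
  ext P x g
  exact sub_mul (c.1 P x) (c'.1 P x) (S.E g)

theorem apply_endState_eq_zero {P : List (α × B)}
    (h : ∀ r ∈ S.liftAlgebra ⊤, ∀ x, (r.2 (S.endState c)).1 P x 1 = 0) :
    ∀ r ∈ S.liftAlgebra ⊤, ∀ x g, (r.2 (S.endState c)).1 P x g = 0 := by
  refine liftAlgebra_induction_left ?_ ?_ ?_ ?_ ?_
  · intro x g
    have hc : c.1 P x = 0 := by simpa [endState_apply, E_one] using h 1 (one_mem _) x
    change (S.endState c).1 P x g = 0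
    rw [endState_apply, hc, zero_mul]
  · intro r s hr hs x g
    change (r.2 (S.endState c)).1 P x g + (s.2 (S.endState c)).1 P x g = 0
    rw [hr, hs, add_zero]
  · intro a r hr x g
    change a • (r.2 (S.endState c)).1 P x g = 0
    rw [hr, smul_zero]
  · intro i r hrmem hr x g
    have join := h (S.liftCoeff (S.E g) * (S.liftVar i * r))
      (mul_mem (liftCoeff_mem trivial) (mul_mem (liftVar_mem i) hrmem)) x
    rw [liftCoeff_mul_apply, liftVar_mul_apply, one_mul, E_ι, hr, add_zero] at join
    rw [liftVar_mul_apply, join, hr, add_zero]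
  · intro b _ r _ hr x g
    rw [liftCoeff_mul_apply, hr]

theorem apply_endState_concat_eq_zero {P : List (α × B)}
    (h : ∀ r ∈ S.liftAlgebra ⊤, ∀ x, (r.2 (S.endState c)).1 P x 1 = 0) (p : α × B) :
    ∀ r ∈ S.liftAlgebra ⊤, ∀ x, (r.2 (S.endState c)).1 (P ++ [p]) x 1 = 0 := by
  intro r hr x
  have join := apply_endState_eq_zero h (S.liftVar x * r) (mul_mem (liftVar_mem x) hr) p.1 (S.ι p.2)
  rwa [liftVar_mul_apply, apply_endState_eq_zero h r hr, add_zero, E_ι] at join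

theorem IsCumulantSeries.unique (hc : S.IsCumulantSeries c) (hc' : S.IsCumulantSeries c') :
    c = c' := by
  have vanish (P : List (α × B)) :
      ∀ r ∈ S.liftAlgebra ⊤, ∀ x, (r.2 (S.endState (c - c'))).1 P x 1 = 0 := by
    induction P using List.reverseRecOn with
    | nil =>
      intro r hr x
      rw [endState_sub, LinearMap.map_sub (M := StateFn α B M) (M₂ := StateFn α B M) r.2]
      exact sub_eq_zero.2 ((hc x r hr).symm.trans (hc' x r hr))
    | append_singleton P p ih => exact apply_endState_concat_eq_zero ih p
  rw [← sub_eq_zero]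
  ext P x
  simpa [endState_apply, E_one] using vanish P 1 (one_mem _) x

/-! ### Alternating products -/

variable {φ : B →ₗ[ℂ] D}

/-- The product `b₁ * a₁ * ⋯ * bₖ * aₖ` of lifted coefficients `bᵢ` and elements `aᵢ`. -/
def altProd (S : RandomFamily B M α) (L : List (B × Lifted α B M)) : Lifted α B M :=
  (L.map fun p => S.liftCoeff p.1 * p.2).prod

/-- All factors of the alternating product of `L` are centred: those from `B` with respect to `φ`,
and those from the algebra generated by the variables and `D` with respect to `E`. -/
def Centred (S : RandomFamily B M α) (φ : B →ₗ[ℂ] D) (L : List (B × Lifted α B M)) : Prop :=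
  ∀ p ∈ L, φ p.1 = 0 ∧ p.2 ∈ S.liftAlgebra D ∧ S.E p.2.1 = 0

/-- The elements of the algebra generated by the variables and `D` have expectation in `D`, and
their products with nonempty alternating products of centred elements have expectation zero. For
faithful `φ` this is equivalent to freeness, whose conclusion involves `φ` in addition to `E`. -/
structure AltVanishing (S : RandomFamily B M α) (φ : B →ₗ[ℂ] D) : Prop where
  E_mem : ∀ a ∈ S.varAlgebra D, S.E a ∈ D
  E_mul_altProd : ∀ a ∈ S.varAlgebra D, ∀ L, S.Centred φ L → L ≠ [] →
    S.E (a * (S.altProd L).1) = 0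

theorem altProd_nil : S.altProd [] = 1 := rfl

theorem altProd_cons (p : B × Lifted α B M) (L : List (B × Lifted α B M)) :
    S.altProd (p :: L) = S.liftCoeff p.1 * (p.2 * S.altProd L) := by
  simp [altProd, mul_assoc]

theorem fst_altProd_cons (p : B × Lifted α B M) (L : List (B × Lifted α B M)) :
    (S.altProd (p :: L)).1 = S.ι p.1 * (p.2.1 * (S.altProd L).1) := by
  rw [altProd_cons]
  rfl

theorem centred_cons {p : B × Lifted α B M} {L : List (B × Lifted α B M)} : S.Centred φ (p :: L) ↔
    (φ p.1 = 0 ∧ p.2 ∈ S.liftAlgebra D ∧ S.E p.2.1 = 0) ∧ S.Centred φ L :=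
  List.forall_mem_cons

theorem centred_nil : S.Centred φ [] := by simp [Centred]

theorem Centred.altProd_mem {L : List (B × Lifted α B M)} (hL : S.Centred φ L) :
    S.altProd L ∈ S.liftAlgebra ⊤ := by
  refine list_prod_mem fun r hr => ?_
  obtain ⟨p, hp, rfl⟩ := List.mem_map.1 hr
  exact mul_mem (liftCoeff_mem trivial) (liftAlgebra_mono le_top (hL p hp).2.1)

theorem sub_liftCoeff_mem {a : Lifted α B M} (ha : a ∈ S.liftAlgebra D) (hE : S.E a.1 ∈ D) :
    a - S.liftCoeff (S.E a.1) ∈ S.liftAlgebra D :=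
  sub_mem ha (liftCoeff_mem hE)

theorem E_sub_liftCoeff (a : Lifted α B M) : S.E (a - S.liftCoeff (S.E a.1)).1 = 0 := by
  rw [Prod.fst_sub, fst_liftCoeff, map_sub, E_ι, sub_self]

theorem apply_sub_apply (hφ : IsCondExp D.val φ) (b : B) : φ (b - φ b) = 0 := by
  rw [map_sub, sub_eq_zero]
  exact (hφ.apply_ι (φ b)).symm

/-! ### State functions vanishing on centred coefficients -/

/-- The state functions which vanish as soon as `φ` vanishes on a coefficient in the block. -/
def vanishingOnCentred (φ : B →ₗ[ℂ] D) : Submodule ℂ (StateFn α B M) where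
  carrier := {f | ∀ P x, (∃ p ∈ P, φ p.2 = 0) → f.1 P x = 0}
  add_mem' hf hf' P x hP := by simp [hf P x hP, hf' P x hP]
  zero_mem' _ _ _ := rfl
  smul_mem' a f hf P x hP := by simp [hf P x hP]

theorem snd_apply_mem_vanishingOnCentred {f : StateFn α B M} (hf : f ∈ vanishingOnCentred φ)
    {r : Lifted α B M} (hr : r ∈ S.liftAlgebra ⊤) : r.2 f ∈ vanishingOnCentred φ := by
  refine snd_apply_mem _ (fun i f hf P x hP => ?_) (fun b _ f hf P x hP => ?_) hr hf
  · obtain ⟨p, hp, hφp⟩ := hP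
    ext g
    change f.1 (P ++ [(x, S.E g)]) i 1 + f.1 P x (g * S.X i) = 0
    rw [hf P x ⟨p, hp, hφp⟩, hf _ i ⟨p, List.mem_append_left _ hp, hφp⟩]
    exact add_zero 0
  · ext g
    change f.1 P x (g * S.ι b) = 0
    rw [hf P x hP]
    rfl

theorem snd_apply_eq_apply_mul {f : StateFn α B M} (hf : f ∈ vanishingOnCentred φ)
    {a : Lifted α B M} (ha : a ∈ S.liftAlgebra D) (P : List (α × B)) (x : α) (g : M)
    (hg : ∀ h ∈ S.varAlgebra D, φ (S.E (g * h)) = 0) :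
    (a.2 f).1 P x g = f.1 P x (g * a.1) := by
  suffices h : ∀ a ∈ S.liftAlgebra D, ∀ g, (∀ h ∈ S.varAlgebra D, φ (S.E (g * h)) = 0) →
      (a.2 f).1 P x g = f.1 P x (g * a.1) from h a ha g hg
  have mul_right {s g : M} (hs : s ∈ S.varAlgebra D)
      (hg : ∀ h ∈ S.varAlgebra D, φ (S.E (g * h)) = 0) :
      ∀ h ∈ S.varAlgebra D, φ (S.E (g * s * h)) = 0 := fun h hh => by
    rw [mul_assoc]
    exact hg _ (mul_mem hs hh)
  refine liftAlgebra_induction_left ?_ ?_ ?_ ?_ ?_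
  · intro g _
    rw [Prod.fst_one, mul_one]
    rfl
  · intro r s hr hs g hg
    rw [Prod.fst_add, mul_add, map_add, ← hr g hg, ← hs g hg]
    rfl
  · intro z r hr g hg
    rw [Prod.smul_fst, mul_smul_comm, map_smul, ← hr g hg]
    rfl
  · intro i r hrmem hr g hg
    have hjoin := snd_apply_mem_vanishingOnCentred hf (liftAlgebra_mono le_top hrmem)
      (P ++ [(x, S.E g)]) i ⟨(x, S.E g), by simp, by simpa using hg 1 (one_mem _)⟩
    rw [liftVar_mul_apply, hjoin, LinearMap.zero_apply, zero_add, ← fst_liftVar, Prod.fst_mul,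
      ← mul_assoc]
    exact hr _ (mul_right (fst_mem_varAlgebra (liftVar_mem i)) hg)
  · intro b hb r _ hr g hg
    rw [liftCoeff_mul_apply, ← fst_liftCoeff, Prod.fst_mul, ← mul_assoc]
    exact hr _ (mul_right (fst_mem_varAlgebra (liftCoeff_mem hb)) hg)

/-- The state function may be moved past an alternating product as if the product were a single
letter, because all the terms in which a variable of the product joins the block have a centred
coefficient. -/
theorem altProd_snd_apply (hφ : IsCondExp D.val φ) (hE : ∀ a ∈ S.varAlgebra D, S.E a ∈ D)
    {f : StateFn α B M} (hf : f ∈ vanishingOnCentred φ) (P : List (α × B)) (x : α)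
    {L : List (B × Lifted α B M)} (hL : S.Centred φ L) {g : M} (hg : S.E g ∈ D)
    (hgL : ∀ L', S.Centred φ L' → L' ≠ [] → L'.length ≤ L.length → S.E (g * (S.altProd L').1) = 0) :
    ((S.altProd L).2 f).1 P x g = f.1 P x (g * (S.altProd L).1) := by
  induction L generalizing g with
  | nil =>
    rw [altProd_nil, Prod.fst_one, mul_one]
    rfl
  | cons p L ih =>
    obtain ⟨⟨hp, ha, hEa⟩, hL⟩ := centred_cons.1 hL
    have single {a : Lifted α B M} (ha : a ∈ S.liftAlgebra D) (hEa : S.E a.1 = 0) :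
        S.E (g * S.ι p.1 * a.1) = 0 := by
      simpa [fst_altProd_cons, altProd_nil, mul_assoc] using
        hgL [(p.1, a)] (centred_cons.2 ⟨⟨hp, ha, hEa⟩, centred_nil⟩) (by simp) (by simp)
    have centred_coeff : ∀ h ∈ S.varAlgebra D, φ (S.E (g * S.ι p.1 * h)) = 0 := by
      intro h hh
      obtain ⟨a, ha, rfl⟩ := exists_fst_eq hh
      have hEh := hE _ hh
      have := single (sub_liftCoeff_mem ha hEh) (E_sub_liftCoeff a)
      rw [Prod.fst_sub, fst_liftCoeff, mul_sub, map_sub, sub_eq_zero, E_mul_ι, E_mul_ι] at this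
      rw [this]
      simpa [hp] using hφ.2 ⟨_, hg⟩ ⟨_, hEh⟩ p.1
    rw [fst_altProd_cons, altProd_cons, liftCoeff_mul_apply, Prod.snd_mul, Module.End.mul_apply,
      snd_apply_eq_apply_mul (snd_apply_mem_vanishingOnCentred hf hL.altProd_mem) ha P x _
        centred_coeff, ← mul_assoc, ← mul_assoc]
    refine ih hL (by rw [single ha hEa]; exact zero_mem D) fun L' hL' _ hlen => ?_
    simpa [fst_altProd_cons, mul_assoc] using
      hgL (p :: L') (centred_cons.2 ⟨⟨hp, ha, hEa⟩, hL'⟩) (by simp) (by simpa using hlen)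

/-! ### From the cumulant series to alternating products -/

/-- `g` is the product of an element of `D` and of at most `n` variables, each of them followed by
an element of `D`. -/
def IsMonomial (S : RandomFamily B M α) (D : Subalgebra ℂ B) (n : ℕ) (g : M) : Prop :=
  ∃ d ∈ D, ∃ w : List (α × B), (∀ p ∈ w, p.2 ∈ D) ∧ w.length ≤ n ∧ g = S.ι d * (S.word w).1

theorem isMonomial_ι {d : B} (hd : d ∈ D) (n : ℕ) : S.IsMonomial D n (S.ι d) :=
  ⟨d, hd, [], by simp, n.zero_le, by simp [word]⟩

theorem IsMonomial.mul {n : ℕ} {g : M} (hg : S.IsMonomial D n g) (i : α) {d : B} (hd : d ∈ D) :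
    S.IsMonomial D (n + 1) (g * S.X i * S.ι d) := by
  obtain ⟨e, he, w, hw, hn, rfl⟩ := hg
  refine ⟨e, he, w ++ [(i, d)], ?_, by simpa using hn, ?_⟩
  · exact List.forall_mem_append.2 ⟨hw, by simpa using hd⟩
  · simp only [word_concat, Prod.fst_mul, fst_liftVar, fst_liftCoeff, mul_assoc]

theorem IsMonomial.mem_varAlgebra {n : ℕ} {g : M} (hg : S.IsMonomial D n g) :
    g ∈ S.varAlgebra D := by
  obtain ⟨d, hd, w, hw, -, rfl⟩ := hg
  exact mul_mem (fst_mem_varAlgebra (liftCoeff_mem hd)) (fst_mem_varAlgebra (word_mem hw))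

theorem word_snd_apply_mem {K : Submodule ℂ B} {f : StateFn α B M} {n : ℕ}
    (hf : ∀ g, S.IsMonomial D n g → ∀ P x, f.1 P x g ∈ K) {w : List (α × B)}
    (hw : ∀ p ∈ w, p.2 ∈ D) {k : ℕ} {g : M} (hg : S.IsMonomial D k g) (hn : k + w.length = n)
    (P : List (α × B)) (x : α) : ((S.word w).2 f).1 P x g ∈ K := by
  induction w generalizing k g P x with
  | nil =>
    obtain rfl : k = n := hn
    exact hf g hg P x
  | cons p w ih =>
    obtain ⟨hp, hw⟩ := List.forall_mem_cons.1 hw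
    rw [List.length_cons] at hn
    rw [word_cons, liftVar_mul_apply, liftCoeff_mul_apply, liftCoeff_mul_apply, one_mul]
    exact K.add_mem (ih hw (isMonomial_ι hp (k + 1)) (by omega) _ _)
      (ih hw (hg.mul p.1 hp) (by omega) _ _)

theorem IsCumulantSeries.E_mul_mem (hc : S.IsCumulantSeries c) {K : Submodule ℂ B}
    (hK : ∀ d ∈ D, ∀ b ∈ K, d * b ∈ K) {R : Set (Lifted α B M)}
    (hR : ∀ r ∈ R, r ∈ S.liftAlgebra ⊤ ∧ S.E r.1 ∈ K)
    (hstep : ∀ n, (∀ r ∈ R, ∀ g, S.IsMonomial D n g → S.E (g * r.1) ∈ K) →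
      ∀ r ∈ R, ∀ g, S.IsMonomial D n g → ∀ P x, (r.2 (S.endState c)).1 P x g ∈ K) :
    ∀ r ∈ R, ∀ a ∈ S.varAlgebra D, S.E (a * r.1) ∈ K := by
  have monomial (n : ℕ) : ∀ r ∈ R, ∀ g, S.IsMonomial D n g → S.E (g * r.1) ∈ K := by
    induction n using Nat.strong_induction_on with
    | h n ih =>
      rintro r hr _ ⟨d, hd, _ | ⟨p, w⟩, hw, hn, rfl⟩
      · simpa [word, E_ι_mul] using hK d hd _ (hR r hr).2
      obtain ⟨hp, hw⟩ := List.forall_mem_cons.1 hw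
      have first := hc p.1 (S.liftCoeff p.2 * (S.word w * r)) (mul_mem (liftCoeff_mem trivial)
        (mul_mem (word_mem fun _ _ => trivial) (hR r hr).1))
      rw [liftCoeff_mul_apply, one_mul] at first
      have mem := word_snd_apply_mem (hstep w.length (ih _ hn) r hr) hw (isMonomial_ι hp 0)
        (zero_add _) [] p.1
      rw [mul_assoc, E_ι_mul, word_cons, Prod.fst_mul, fst_liftVar, mul_assoc, ← Prod.fst_mul,
        mul_assoc, first]
      exact hK d hd _ mem
  intro r hr a ha
  obtain ⟨a, ha', rfl⟩ := exists_fst_eq ha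
  refine liftAlgebra_induction (p := fun a => S.E (a.1 * r.1) ∈ K) (fun a b ha hb => ?_)
    (fun z a ha => ?_) (fun d hd w hw => ?_) a ha'
  · simpa [add_mul] using K.add_mem ha hb
  · simpa using K.smul_mem z ha
  · exact monomial w.length r hr _ ⟨d, hd, w, hw, le_rfl, rfl⟩

theorem IsCumulantSeries.E_mem (hc : S.IsCumulantSeries c) (hD : ∀ P x, c.1 P x ∈ D) :
    ∀ a ∈ S.varAlgebra D, S.E a ∈ D := by
  have := hc.E_mul_mem (D := D) (K := Subalgebra.toSubmodule D) (fun _ hd _ => D.mul_mem hd)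
    (R := {1}) (by simp [E_one]) ?_
  · simpa using this
  · rintro n ih _ rfl g hg P x
    exact D.mul_mem (hD P x) (by simpa using ih 1 rfl g hg)

theorem endState_mem_vanishingOnCentred (hker : ∀ P x, (∃ p ∈ P, φ p.2 = 0) → c.1 P x = 0) :
    S.endState c ∈ vanishingOnCentred φ := fun P x hP => by
  ext g
  rw [endState_apply, hker P x hP, zero_mul]
  rfl

theorem IsCumulantSeries.altVanishing (hc : S.IsCumulantSeries c) (hφ : IsCondExp D.val φ)
    (hD : ∀ P x, c.1 P x ∈ D) (hker : ∀ P x, (∃ p ∈ P, φ p.2 = 0) → c.1 P x = 0) :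
    S.AltVanishing φ := by
  have alternating (n : ℕ) : ∀ L, S.Centred φ L → L ≠ [] → L.length ≤ n →
      ∀ a ∈ S.varAlgebra D, S.E (a * (S.altProd L).1) = 0 := by
    induction n with
    | zero => grind
    | succ n ih =>
      have := hc.E_mul_mem (D := D) (K := ⊥) (by simp)
        (R := S.altProd '' {L | S.Centred φ L ∧ L ≠ [] ∧ L.length ≤ n + 1}) ?_ ?_
      · exact fun L hL hne hlen a => this _ ⟨L, ⟨hL, hne, hlen⟩, rfl⟩ a
      · rintro _ ⟨_ | ⟨p, L⟩, ⟨hL, hne, hlen⟩, rfl⟩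
        · contradiction
        refine ⟨hL.altProd_mem, ?_⟩
        obtain ⟨⟨-, ha, hEa⟩, hL⟩ := centred_cons.1 hL
        rw [Submodule.mem_bot, fst_altProd_cons, E_ι_mul]
        obtain rfl | hL' := eq_or_ne L []
        · rw [altProd_nil, Prod.fst_one, mul_one, hEa, mul_zero]
        · rw [ih L hL hL' (by simpa using hlen) _ (fst_mem_varAlgebra ha), mul_zero]
      · rintro k hk _ ⟨L, ⟨hL, hne, hlen⟩, rfl⟩ g hg P x
        have hgL {L'} (hL' : S.Centred φ L') (hne' : L' ≠ []) (hlen' : L'.length ≤ L.length) :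
            S.E (g * (S.altProd L').1) = 0 :=
          hk _ ⟨L', ⟨hL', hne', hlen'.trans hlen⟩, rfl⟩ g hg
        rw [altProd_snd_apply hφ (hc.E_mem hD) (endState_mem_vanishingOnCentred hker) P x hL
          (hc.E_mem hD g hg.mem_varAlgebra) fun L' => hgL, endState_apply,
          hgL hL hne le_rfl, mul_zero]
        exact zero_mem _
  exact ⟨hc.E_mem hD, fun a ha L hL hne => alternating _ L hL hne le_rfl a ha⟩

/-! ### From alternating products to the cumulant series -/

/-- The span of the products of an element of the algebra generated by the variables and `D`, an
alternating product of centred elements, and an element of `B`. -/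
def normalForms (S : RandomFamily B M α) (φ : B →ₗ[ℂ] D) : Submodule ℂ (Lifted α B M) :=
  Submodule.span ℂ {r | ∃ a ∈ S.liftAlgebra D, ∃ L, S.Centred φ L ∧ ∃ b,
    r = a * (S.altProd L * S.liftCoeff b)}

theorem mul_altProd_mul_mem_normalForms {a : Lifted α B M} (ha : a ∈ S.liftAlgebra D)
    {L : List (B × Lifted α B M)} (hL : S.Centred φ L) (b : B) :
    a * (S.altProd L * S.liftCoeff b) ∈ S.normalForms φ :=
  Submodule.subset_span ⟨a, ha, L, hL, b, rfl⟩

theorem mul_mem_normalForms {s : Lifted α B M}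
    (hs : ∀ a ∈ S.liftAlgebra D, ∀ L, S.Centred φ L → ∀ b,
      s * (a * (S.altProd L * S.liftCoeff b)) ∈ S.normalForms φ)
    {r : Lifted α B M} (hr : r ∈ S.normalForms φ) : s * r ∈ S.normalForms φ := by
  induction hr using Submodule.span_induction with
  | mem r hr =>
    obtain ⟨a, ha, L, hL, b, rfl⟩ := hr
    exact hs a ha L hL b
  | zero => simp
  | add r r' _ _ hr hr' => simpa [mul_add] using add_mem hr hr'
  | smul z r _ hr => simpa using (S.normalForms φ).smul_mem z hr

theorem liftCoeff_mul_altProd_mem_normalForms (hφ : IsCondExp D.val φ)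
    {L : List (B × Lifted α B M)} (hL : S.Centred φ L) (u b : B) :
    S.liftCoeff u * (S.altProd L * S.liftCoeff b) ∈ S.normalForms φ := by
  cases L with
  | nil => simpa [altProd_nil] using mul_altProd_mul_mem_normalForms (one_mem _) hL (u * b)
  | cons p L =>
    obtain ⟨⟨-, hp⟩, hL⟩ := centred_cons.1 hL
    have hcentred : S.Centred φ ((u * p.1 - φ (u * p.1), p.2) :: L) :=
      centred_cons.2 ⟨⟨apply_sub_apply hφ _, hp⟩, hL⟩
    have := add_mem (mul_altProd_mul_mem_normalForms (one_mem _) hcentred b)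
      (mul_altProd_mul_mem_normalForms (mul_mem (liftCoeff_mem (φ (u * p.1)).2) hp.1) hL b)
    rw [altProd_cons, map_sub, map_mul] at this
    rw [altProd_cons]
    convert this using 1
    noncomm_ring

theorem liftCoeff_mul_mem_normalForms (hφ : IsCondExp D.val φ)
    (hE : ∀ a ∈ S.varAlgebra D, S.E a ∈ D) (u : B) {a : Lifted α B M} (ha : a ∈ S.liftAlgebra D)
    {L : List (B × Lifted α B M)} (hL : S.Centred φ L) (b : B) :
    S.liftCoeff u * (a * (S.altProd L * S.liftCoeff b)) ∈ S.normalForms φ := by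
  have hEa := hE _ (fst_mem_varAlgebra ha)
  have hcentred : S.Centred φ ((u - φ u, a - S.liftCoeff (S.E a.1)) :: L) := centred_cons.2
    ⟨⟨apply_sub_apply hφ u, sub_liftCoeff_mem ha hEa, E_sub_liftCoeff a⟩, hL⟩
  have := add_mem (add_mem
      (mul_altProd_mul_mem_normalForms (mul_mem (liftCoeff_mem (φ u).2) ha) hL b)
      (mul_altProd_mul_mem_normalForms (one_mem _) hcentred b))
    (liftCoeff_mul_altProd_mem_normalForms hφ hL ((u - φ u) * S.E a.1) b)
  rw [altProd_cons, map_mul, map_sub] at this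
  convert this using 1
  noncomm_ring

theorem mem_normalForms (hφ : IsCondExp D.val φ) (hE : ∀ a ∈ S.varAlgebra D, S.E a ∈ D) :
    ∀ r ∈ S.liftAlgebra ⊤, r ∈ S.normalForms φ := by
  refine liftAlgebra_induction_left ?_ (fun _ _ => add_mem)
    (fun z _ => (S.normalForms φ).smul_mem z) (fun i r _ hr => ?_) fun u _ r _ hr => ?_
  · simpa [altProd_nil] using
      mul_altProd_mul_mem_normalForms (S := S) (φ := φ) (one_mem _) centred_nil 1
  · refine mul_mem_normalForms (fun a ha L hL b => ?_) hr
    rw [← mul_assoc]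
    exact mul_altProd_mul_mem_normalForms (mul_mem (liftVar_mem i) ha) hL b
  · exact mul_mem_normalForms
      (fun a ha L hL b => liftCoeff_mul_mem_normalForms hφ hE u ha hL b) hr

theorem AltVanishing.apply_mul_altProd_eq_zero (h : S.AltVanishing φ) (hφ : IsCondExp D.val φ)
    {c : CoeffLinear α B B} (hker : ∀ P x, (∃ p ∈ P, φ p.2 = 0) → c.1 P x = 0)
    {a : Lifted α B M} (ha : a ∈ S.liftAlgebra D) {L : List (B × Lifted α B M)}
    (hL : S.Centred φ L) (hne : L ≠ []) (b : B) (P : List (α × B)) (x : α) :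
    ((a * (S.altProd L * S.liftCoeff b)).2 (S.endState c)).1 P x 1 = 0 := by
  let K : Submodule ℂ (StateFn α B M) :=
    { carrier := {f | ∀ P x, ∀ g ∈ S.varAlgebra D, f.1 P x g = 0}
      add_mem' := fun hf hf' P x g hg => by simp [hf P x g hg, hf' P x g hg]
      zero_mem' := fun _ _ _ _ => rfl
      smul_mem' := fun z f hf P x g hg => by simp [hf P x g hg] }
  have altProd_mem : (S.altProd L).2 ((S.liftCoeff b).2 (S.endState c)) ∈ K := fun P x g hg => by
    rw [altProd_snd_apply hφ h.E_mem (snd_apply_mem_vanishingOnCentred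
      (endState_mem_vanishingOnCentred hker) (liftCoeff_mem trivial)) P x hL (h.E_mem g hg)
      fun L' hL' hne' _ => h.E_mul_altProd g hg L' hL' hne']
    change c.1 P x * S.E (g * (S.altProd L).1 * S.ι b) = 0
    rw [E_mul_ι, h.E_mul_altProd g hg L hL hne, zero_mul, mul_zero]
  refine snd_apply_mem K (fun i f hf P x g hg => ?_) (fun d hd f hf P x g hg => ?_) ha altProd_mem
    P x 1 (one_mem _)
  · change f.1 (P ++ [(x, S.E g)]) i 1 + f.1 P x (g * S.X i) = 0
    rw [hf _ _ _ (one_mem _), zero_add]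
    exact hf _ _ _ (mul_mem hg (fst_mem_varAlgebra (liftVar_mem i)))
  · exact hf _ _ _ (mul_mem hg (fst_mem_varAlgebra (liftCoeff_mem hd)))

section Restriction

variable {B' : Type*} [Ring B'] [Algebra ℂ B'] {j : B' →ₐ[ℂ] B} {ψ : B →ₗ[ℂ] B'}
  {κ : MultiplicativeMap (S.ι.comp j)} {P : List (α × B)}

theorem apply_condCoeffs_eq_zero (c : CoeffLinear α B B) (hP : ∃ p ∈ P, ψ p.2 = 0) (x : α) :
    c.1 (condCoeffs ψ j P) x = 0 := by
  obtain ⟨⟨i, b⟩, hp, hψ : ψ b = 0⟩ := hP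
  obtain ⟨Q, R, rfl⟩ := List.append_of_mem hp
  simpa [condCoeffs, hψ] using (c.2 (condCoeffs ψ j Q) i (condCoeffs ψ j R) x).map_zero

theorem cumulant_condCoeffs (hψ : IsCondExp j ψ) (P : List (α × B)) (x : α) :
    (cumulant ψ κ).1 (condCoeffs ψ j P) x = (cumulant ψ κ).1 P x := by
  have idem : (fun b => j (ψ b)) ∘ (fun b => j (ψ b)) = fun b => j (ψ b) := by
    ext b
    exact congrArg j (hψ.apply_ι _)
  simp [cumulant_apply, condCoeffs, Prod.map_comp_map, idem]

theorem cumulant_eq_zero (hψ : IsCondExp j ψ) (hP : ∃ p ∈ P, ψ p.2 = 0) (x : α) :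
    (cumulant ψ κ).1 P x = 0 := by
  rw [← cumulant_condCoeffs hψ, apply_condCoeffs_eq_zero _ hP]

end Restriction

theorem AltVanishing.isCumulantSeries_cumulant (h : S.AltVanishing φ) (hφ : IsCondExp D.val φ)
    {κ : MultiplicativeMap (S.ι.comp D.val)}
    (hκ : IsCumulantMap (S.ι.comp D.val) (φ ∘ₗ S.E) κ) : S.IsCumulantSeries (cumulant φ κ) := by
  have hE : ∀ a ∈ S.varAlgebra D.val.range, (φ (S.E a) : B) = S.E a := fun a ha => by
    rw [Subalgebra.range_val] at ha
    exact congrArg D.val (hφ.apply_ι ⟨_, h.E_mem a ha⟩)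
  intro x r hr
  replace hr := mem_normalForms hφ h.E_mem r hr
  rw [normalForms] at hr
  induction hr using Submodule.span_induction with
  | zero => simp
  | add r s _ _ hr hs =>
    rw [Prod.fst_add, mul_add, map_add, hr, hs]
    rfl
  | smul z r _ hr =>
    rw [Prod.smul_fst, mul_smul_comm, map_smul, hr]
    rfl
  | mem r hr =>
    obtain ⟨a, ha, L, hL, b, rfl⟩ := hr
    obtain rfl | hne := eq_or_ne L []
    · rw [altProd_nil, one_mul]
      exact expectation_eq_endState hφ hE hκ x b a (by rwa [Subalgebra.range_val])
    · have hXa : S.X x * a.1 ∈ S.varAlgebra D :=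
        mul_mem (fst_mem_varAlgebra (liftVar_mem x)) (fst_mem_varAlgebra ha)
      rw [h.apply_mul_altProd_eq_zero hφ (fun P x hP => cumulant_eq_zero hφ hP x) ha hL hne,
        Prod.fst_mul, Prod.fst_mul, fst_liftCoeff, ← mul_assoc, ← mul_assoc, E_mul_ι,
        h.E_mul_altProd _ hXa L hL hne, zero_mul]

/-! ### Freeness -/

/-- The family is free from `B` with amalgamation over `D`. -/
def IsFree (S : RandomFamily B M α) (φ : B →ₗ[ℂ] D) : Prop :=
  FreeWithAmalgamation (fun m => (φ (S.E m) : B)) (S.varAlgebra D) S.ι.range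

/-- The factors in `l` are centred and are taken alternately from the algebra generated by the
variables and `D` (those marked `true`) and from `B` (those marked `false`), the first of them not
being marked `s`. -/
def IsAlternating (S : RandomFamily B M α) (φ : B →ₗ[ℂ] D) (s : Bool) (l : List (M × Bool)) :
    Prop :=
  (s :: l.map Prod.snd).IsChain (· ≠ ·) ∧
    ∀ p ∈ l, p.1 ∈ (if p.2 then S.varAlgebra D else S.ι.range) ∧ (φ (S.E p.1) : B) = 0

theorem isAlternating_nil {s : Bool} : S.IsAlternating φ s [] := by simp [IsAlternating]

theorem isAlternating_cons {s : Bool} {p : M × Bool} {l : List (M × Bool)} :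
    S.IsAlternating φ s (p :: l) ↔ s ≠ p.2 ∧
      (p.1 ∈ (if p.2 then S.varAlgebra D else S.ι.range) ∧ φ (S.E p.1) = 0) ∧
      S.IsAlternating φ p.2 l := by
  simp only [IsAlternating, List.map_cons, List.isChain_cons_cons, List.forall_mem_cons,
    ZeroMemClass.coe_eq_zero]
  tauto

theorem isAlternating_true_cons {p : M × Bool} {l : List (M × Bool)} :
    S.IsAlternating φ true (p :: l) ↔
      ∃ b, p = (S.ι b, false) ∧ φ b = 0 ∧ S.IsAlternating φ false l := by
  rw [isAlternating_cons]
  constructor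
  · rintro ⟨ht, ⟨hm, hφm⟩, hl⟩
    obtain ⟨m, t⟩ := p
    obtain rfl : t = false := Bool.eq_false_of_not_eq_true ht.symm
    obtain ⟨b, rfl⟩ := hm
    exact ⟨b, rfl, by simpa [E_ι] using hφm, hl⟩
  · rintro ⟨b, rfl, hφb, hl⟩
    exact ⟨by simp, ⟨⟨b, rfl⟩, by rw [E_ι, hφb]⟩, hl⟩

theorem isAlternating_false_cons {p : M × Bool} {l : List (M × Bool)} :
    S.IsAlternating φ false (p :: l) ↔
      ∃ a ∈ S.varAlgebra D, p = (a, true) ∧ φ (S.E a) = 0 ∧ S.IsAlternating φ true l := by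
  rw [isAlternating_cons]
  constructor
  · rintro ⟨ht, ⟨hm, hφm⟩, hl⟩
    obtain ⟨m, t⟩ := p
    obtain rfl : t = true := Bool.eq_true_of_not_eq_false ht.symm
    exact ⟨m, hm, rfl, hφm, hl⟩
  · rintro ⟨a, ha, rfl, hφa, hl⟩
    exact ⟨by simp, ⟨ha, hφa⟩, hl⟩

theorem isFree_iff_isAlternating : S.IsFree φ ↔
    ∀ s l, l ≠ [] → S.IsAlternating φ s l → φ (S.E (l.map Prod.fst).prod) = 0 := by
  refine ⟨fun h s l hne hl => ?_, fun h l hne hchain hl => ?_⟩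
  · exact Subtype.ext (h l hne ((List.isChain_map _).1 hl.1.tail) hl.2)
  · obtain ⟨⟨m, t⟩, l, rfl⟩ := List.exists_cons_of_ne_nil hne
    refine congrArg Subtype.val (h (!t) _ hne ⟨?_, hl⟩)
    exact List.isChain_cons_cons.2 ⟨by simp, (List.isChain_map _).2 hchain⟩

/-- The factors of the alternating product of `L`. -/
def altFactors (S : RandomFamily B M α) (L : List (B × Lifted α B M)) : List (M × Bool) :=
  L.flatMap fun p => [(S.ι p.1, false), (p.2.1, true)]

theorem altFactors_cons (p : B × Lifted α B M) (L : List (B × Lifted α B M)) :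
    S.altFactors (p :: L) = (S.ι p.1, false) :: (p.2.1, true) :: S.altFactors L := rfl

theorem prod_altFactors (L : List (B × Lifted α B M)) :
    ((S.altFactors L).map Prod.fst).prod = (S.altProd L).1 := by
  induction L with
  | nil => rfl
  | cons p L ih => simp [altFactors_cons, fst_altProd_cons, ih]

theorem isAlternating_altFactors_append {L : List (B × Lifted α B M)} (hL : S.Centred φ L)
    {l : List (M × Bool)} (hl : S.IsAlternating φ true l) :
    S.IsAlternating φ true (S.altFactors L ++ l) := by
  induction L with
  | nil => exact hl
  | cons p L ih =>
    obtain ⟨⟨hp, ha, hEa⟩, hL⟩ := centred_cons.1 hL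
    exact isAlternating_true_cons.2 ⟨p.1, rfl, hp, isAlternating_false_cons.2
      ⟨p.2.1, fst_mem_varAlgebra ha, rfl, by rw [hEa, map_zero], ih hL⟩⟩

theorem IsFree.apply_E_mul_altProd_mul (h : S.IsFree φ) (hφ : IsCondExp D.val φ) {a : M}
    (ha : a ∈ S.varAlgebra D) (hφa : φ (S.E a) = 0) {L : List (B × Lifted α B M)}
    (hL : S.Centred φ L) (b : B) : φ (S.E (a * (S.altProd L).1) * b) = 0 := by
  have tail {l : List (M × Bool)} (hl : S.IsAlternating φ true l) :
      φ (S.E (a * (S.altProd L).1 * (l.map Prod.fst).prod)) = 0 := by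
    have := isFree_iff_isAlternating.1 h false ((a, true) :: (S.altFactors L ++ l)) (by simp)
      (isAlternating_false_cons.2 ⟨a, ha, rfl, hφa, isAlternating_altFactors_append hL hl⟩)
    simpa [prod_altFactors, mul_assoc] using this
  have const := tail isAlternating_nil
  have centred := tail (l := [(S.ι (b - φ b), false)]) (isAlternating_true_cons.2
    ⟨_, rfl, apply_sub_apply hφ b, isAlternating_nil⟩)
  rw [List.map_nil, List.prod_nil, mul_one] at const
  rw [List.map_singleton, List.prod_singleton, E_mul_ι, mul_sub, map_sub, sub_eq_zero] at centred
  rw [centred]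
  exact (hφ.apply_mul_ι _ _).trans (by rw [const, zero_mul])

theorem IsFree.altVanishing (h : S.IsFree φ) (hφ : IsCondExp D.val φ)
    (hfaithful : ∀ b₁, (∀ b₂, φ (b₁ * b₂) = 0) → b₁ = 0) : S.AltVanishing φ := by
  have vanish {a : M} (ha : a ∈ S.varAlgebra D) (hφa : φ (S.E a) = 0)
      {L : List (B × Lifted α B M)} (hL : S.Centred φ L) : S.E (a * (S.altProd L).1) = 0 :=
    hfaithful _ (h.apply_E_mul_altProd_mul hφ ha hφa hL)
  have vanish_sub {a : M} (ha : a ∈ S.varAlgebra D) {L : List (B × Lifted α B M)}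
      (hL : S.Centred φ L) : S.E (a * (S.altProd L).1) = φ (S.E a) * S.E (S.altProd L).1 := by
    have hmem : a - S.ι (φ (S.E a)) ∈ S.varAlgebra D :=
      sub_mem ha (fst_mem_varAlgebra (liftCoeff_mem (φ (S.E a)).2))
    have := vanish hmem (by rw [map_sub, E_ι, apply_sub_apply hφ]) hL
    rwa [sub_mul, map_sub, sub_eq_zero, E_ι_mul] at this
  refine ⟨fun a ha => ?_, fun a ha L hL hne => ?_⟩
  · have := vanish_sub ha centred_nil
    rw [altProd_nil, Prod.fst_one, mul_one, E_one, mul_one] at this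
    rw [this]
    exact (φ (S.E a)).2
  · obtain ⟨p, L, rfl⟩ := List.exists_cons_of_ne_nil hne
    obtain ⟨⟨-, ha', hEa'⟩, hL'⟩ := centred_cons.1 hL
    rw [vanish_sub ha hL, fst_altProd_cons, E_ι_mul,
      vanish (fst_mem_varAlgebra ha') (by rw [hEa', map_zero]) hL', mul_zero, mul_zero]

theorem AltVanishing.E_eq_zero (h : S.AltVanishing φ) (hφ : IsCondExp D.val φ) {a : M}
    (ha : a ∈ S.varAlgebra D) (hφa : φ (S.E a) = 0) : S.E a = 0 :=
  congrArg Subtype.val ((hφ.apply_ι ⟨_, h.E_mem a ha⟩).symm.trans hφa)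

theorem AltVanishing.exists_eq_altProd_mul_ι (h : S.AltVanishing φ) (hφ : IsCondExp D.val φ) :
    ∀ {l : List (M × Bool)}, S.IsAlternating φ true l →
      ∃ L, S.Centred φ L ∧ ∃ b, (l.map Prod.fst).prod = (S.altProd L).1 * S.ι b
  | [], _ => ⟨[], centred_nil, 1, by simp [altProd_nil]⟩
  | [_], hl => by
    obtain ⟨b, rfl, -⟩ := isAlternating_true_cons.1 hl
    exact ⟨[], centred_nil, b, by simp [altProd_nil]⟩
  | _ :: _ :: l, hl => by
    obtain ⟨b, rfl, hφb, hl₁⟩ := isAlternating_true_cons.1 hl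
    obtain ⟨a, ha, rfl, hφa, hl₂⟩ := isAlternating_false_cons.1 hl₁
    obtain ⟨L, hL, c, hc⟩ := h.exists_eq_altProd_mul_ι hφ hl₂
    obtain ⟨r, hr, rfl⟩ := exists_fst_eq ha
    exact ⟨(b, r) :: L, centred_cons.2 ⟨⟨hφb, hr, h.E_eq_zero hφ ha hφa⟩, hL⟩, c,
      by simp [fst_altProd_cons, hc, mul_assoc]⟩

theorem AltVanishing.E_mul_prod_eq_zero (h : S.AltVanishing φ) (hφ : IsCondExp D.val φ) {a : M}
    (ha : a ∈ S.varAlgebra D) (hφa : φ (S.E a) = 0) {l : List (M × Bool)}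
    (hl : S.IsAlternating φ true l) : S.E (a * (l.map Prod.fst).prod) = 0 := by
  obtain ⟨L, hL, b, hprod⟩ := h.exists_eq_altProd_mul_ι hφ hl
  rw [hprod, ← mul_assoc, E_mul_ι]
  obtain rfl | hne := eq_or_ne L []
  · rw [altProd_nil, Prod.fst_one, mul_one, h.E_eq_zero hφ ha hφa, zero_mul]
  · rw [h.E_mul_altProd a ha L hL hne, zero_mul]

theorem AltVanishing.isFree (h : S.AltVanishing φ) (hφ : IsCondExp D.val φ) : S.IsFree φ := by
  have of_false {l : List (M × Bool)} (hne : l ≠ []) (hl : S.IsAlternating φ false l) :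
      S.E (l.map Prod.fst).prod = 0 := by
    obtain ⟨p, l, rfl⟩ := List.exists_cons_of_ne_nil hne
    obtain ⟨a, ha, rfl, hφa, hl⟩ := isAlternating_false_cons.1 hl
    rw [List.map_cons, List.prod_cons, h.E_mul_prod_eq_zero hφ ha hφa hl]
  rw [isFree_iff_isAlternating]
  rintro (_ | _) l hne hl
  · rw [of_false hne hl, map_zero]
  · obtain ⟨p, l, rfl⟩ := List.exists_cons_of_ne_nil hne
    obtain ⟨b, rfl, hφb, hl⟩ := isAlternating_true_cons.1 hl
    rw [List.map_cons, List.prod_cons, E_ι_mul]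
    obtain rfl | hne := eq_or_ne l []
    · simpa [E_one] using hφb
    · rw [of_false hne hl, mul_zero, map_zero]

theorem isFree_iff_altVanishing (hφ : IsCondExp D.val φ)
    (hfaithful : ∀ b₁, (∀ b₂, φ (b₁ * b₂) = 0) → b₁ = 0) : S.IsFree φ ↔ S.AltVanishing φ :=
  ⟨fun h => h.altVanishing hφ hfaithful, fun h => h.isFree hφ⟩

/-! ### Factorization of the cumulant series -/

theorem altVanishing_iff_eq_cumulant {c : CoeffLinear α B B} (hc : S.IsCumulantSeries c)
    (hφ : IsCondExp D.val φ) {κ : MultiplicativeMap (S.ι.comp D.val)}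
    (hκ : IsCumulantMap (S.ι.comp D.val) (φ ∘ₗ S.E) κ) :
    S.AltVanishing φ ↔ c = cumulant φ κ := by
  refine ⟨fun h => hc.unique (h.isCumulantSeries_cumulant hφ hκ), ?_⟩
  rintro rfl
  exact hc.altVanishing hφ (fun P x => Subtype.property _) fun P x hP => cumulant_eq_zero hφ hP x

theorem altVanishing_iff_apply_eq {c : CoeffLinear α B B} (hc : S.IsCumulantSeries c)
    (hφ : IsCondExp D.val φ) {κ : MultiplicativeMap (S.ι.comp D.val)}
    (hκ : IsCumulantMap (S.ι.comp D.val) (φ ∘ₗ S.E) κ) :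
    S.AltVanishing φ ↔ ∀ P x, c.1 P x = φ (c.1 (condCoeffs φ D.val P) x) := by
  refine ⟨fun h P x => ?_, fun h => hc.altVanishing hφ (fun P x => ?_) fun P x hP => ?_⟩
  · obtain rfl := (altVanishing_iff_eq_cumulant hc hφ hκ).1 h
    rw [cumulant_condCoeffs hφ]
    exact congrArg Subtype.val (hφ.apply_ι _).symm
  · rw [h]
    exact Subtype.property _
  · rw [h, apply_condCoeffs_eq_zero c hP, map_zero]
    rfl

theorem condCoeffs_tupleList {B' : Type*} [Ring B'] [Algebra ℂ B'] (ψ : B →ₗ[ℂ] B')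
    (j : B' →ₐ[ℂ] B) {k : ℕ} (i : Fin (k + 1) → α) (b : Fin k → B) :
    condCoeffs ψ j (tupleList i b) = tupleList i fun l => j (ψ (b l)) := by
  simp [condCoeffs, tupleList, Function.comp_def]

theorem cumulant_tupleList {N : ℕ} {S : RandomFamily B M (Fin N)} {B' : Type*} [Ring B']
    [Algebra ℂ B'] {j : B' →ₐ[ℂ] B} (ψ : B →ₗ[ℂ] B') (κ : MultiplicativeMap (S.ι.comp j)) {k : ℕ}
    (i : Fin (k + 1) → Fin N) (b : Fin k → B) :
    (cumulant ψ κ).1 (tupleList i b) (i (Fin.last k)) =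
      j (cumulantSeries κ S.X i fun l => ψ (b l)) := by
  rw [cumulant_apply, condCoeffs_tupleList]
  simp [cumulantSeries, cumulantArgs, tupleList, Function.comp_def]

end RandomFamily

end OVFree

/-- **main theorem.** Let `(M, E : M → B)` be a `B`-probability space (with
`ι : B → M` the inclusion of `B` as a unital subalgebra), `D ⊆ B` a unital subalgebra and
`F : B → D` a conditional expectation satisfying the faithfulness condition
(`F(b₁ b₂) = 0` for all `b₂` implies `b₁ = 0`).  Let `X₁, …, X_N ∈ M`, let `κ` be the
`B`-valued cumulant map of `(M, E)` and `κD` the `D`-valued cumulant map of `(M, F∘E)`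
(`ED` is `F∘E` viewed as a map into `D`).  Then `X₁, …, X_N` are free from `B` with
amalgamation over `D` (with respect to `F∘E`) iff
`k_{B;i₁,…,i_k}(b₁, …, b_{k−1}) = F(k_{B;i₁,…,i_k}(F(b₁), …, F(b_{k−1})))` for all `k`,
all indices and all `bⱼ ∈ B`; equivalently, iff
`k_{B;i₁,…,i_k}(b₁, …, b_{k−1}) = k_{D;i₁,…,i_k}(F(b₁), …, F(b_{k−1}))`. -/
theorem freeness_iff_R_transform_factorization
    {B M : Type*} [Ring B] [Algebra ℂ B] [Ring M] [Algebra ℂ M]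
    (ι : B →ₐ[ℂ] M) (hι : Function.Injective ι)
    (E : M →ₗ[ℂ] B) (hE : IsCondExp ι E)
    (D : Subalgebra ℂ B)
    (F : B →ₗ[ℂ] B) (hFD : ∀ b, F b ∈ D) (hFid : ∀ d ∈ D, F d = d)
    (hFbimod : ∀ d ∈ D, ∀ d' ∈ D, ∀ b : B, F (d * b * d') = d * F b * d')
    (hFfaithful : ∀ b₁ : B, (∀ b₂ : B, F (b₁ * b₂) = 0) → b₁ = 0)
    (ED : M →ₗ[ℂ] ↥D) (hED : ∀ m : M, (ED m : B) = F (E m))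
    (κ : MultiplicativeMap ι) (hκ : IsCumulantMap ι E κ)
    (κD : MultiplicativeMap (ι.comp D.val)) (hκD : IsCumulantMap (ι.comp D.val) ED κD)
    {N : ℕ} (X : Fin N → M) :
    (FreeWithAmalgamation (fun m => F (E m))
        (Algebra.adjoin ℂ (Set.range X ∪ (ι '' (D : Set B)))) ι.range
      ↔ ∀ (k : ℕ) (i : Fin (k + 1) → Fin N) (b : Fin k → B),
          cumulantSeries κ X i b = F (cumulantSeries κ X i fun j => F (b j)))
    ∧
    (FreeWithAmalgamation (fun m => F (E m))
        (Algebra.adjoin ℂ (Set.range X ∪ (ι '' (D : Set B)))) ι.range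
      ↔ ∀ (k : ℕ) (i : Fin (k + 1) → Fin N) (b : Fin k → B),
          cumulantSeries κ X i b
            = ((cumulantSeries κD X i fun j => (⟨F (b j), hFD (b j)⟩ : ↥D) : ↥D) : B)) := by
  obtain rfl : (F.codRestrict D.toSubmodule hFD) ∘ₗ E = ED :=
    LinearMap.ext fun m => Subtype.ext (hED m).symm
  let S : RandomFamily B M (Fin N) := ⟨ι, E, hE, X⟩
  let φ : B →ₗ[ℂ] D := F.codRestrict D.toSubmodule hFD
  have hφ : IsCondExp D.val φ :=
    ⟨Subtype.ext (hFid 1 (one_mem D)), fun d d' b => Subtype.ext (hFbimod d d.2 d' d'.2 b)⟩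
  have free : S.IsFree φ ↔ S.AltVanishing φ :=
    RandomFamily.isFree_iff_altVanishing hφ fun b₁ h =>
      hFfaithful b₁ fun b₂ => congrArg Subtype.val (h b₂)
  have hc := RandomFamily.isCumulantSeries_cumulant (S := S) hκ
  have series {k : ℕ} (i : Fin (k + 1) → Fin N) (b : Fin k → B) :=
    RandomFamily.cumulant_tupleList (S := S) (j := AlgHom.id ℂ B) LinearMap.id κ i b
  constructor
  · refine free.trans ((RandomFamily.altVanishing_iff_apply_eq hc hφ hκD).trans
      (forall_list_iff_forall_tuple.trans ?_))
    simp only [RandomFamily.condCoeffs_tupleList, series]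
    rfl
  · refine free.trans ((RandomFamily.altVanishing_iff_eq_cumulant hc hφ hκD).trans ?_)
    simp only [Subtype.ext_iff, funext_iff, forall_list_iff_forall_tuple,
      series, RandomFamily.cumulant_tupleList]
    rfl
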